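/- arXiv:1312.5401 — 4 statements merged into one kernel-verified Lean document; each statement's English description precedes it below -/
import Mathlib

section
/- Let M_1 and M_2 be matroids on the same ground set, and assume that (e_1, e_2, e_3, e_4) is a fan with e_1 as a spoke element in both M_1 and M_2. If M_1 \ e_1 = M_2 \ e_1, then M_1 = M_2. -/
/-!
Write `T = {e₁, e₂, e₃}` for the triangle and `K = {e₂, e₃, e₄}` for the triad. It suffices to
express the independence of `insert e₁ X`, where `e₁ ∉ X`, through independence of sets
avoiding `e₁`, since those are determined by the deletion of `e₁`. Two facts do this.

* Once one element `b` of the triangle `{a, b, c}` is in `X`, the elements `a` and `c` are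
  interchangeable as additions to `X` (`indep_insert_swap`).
* An independent set disjoint from a cocircuit stays independent when any element of the
  cocircuit is added (`indep_insert_of_cocircuit`).

If `X` contains exactly one of `e₂` and `e₃`, the first fact replaces `e₁` by the other one; if
`X` contains both, `insert e₁ X` is dependent. If `X` contains neither, put `Y = X \ {e₄}`. By the
second fact, `insert e₁ X` is independent iff `insert e₁ Y` is, iff `Y ∪ {e₁, e₂}` is; by the
first fact this holds iff `Y ∪ {e₂, e₃}` is independent.
-/

open Matroid Set

universe u

variable {α : Type u}

namespace PaperDefs

/-- Deletion of a set of elements from a matroid. -/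
def mdel (M : Matroid α) (D : Set α) : Matroid α := M ↾ (M.E \ D)

/-- Contraction of a set of elements in a matroid. -/
def mcon (M : Matroid α) (C : Set α) : Matroid α := (mdel M✶ C)✶

/-- A circuit: a minimal dependent set. -/
def IsCircuit (M : Matroid α) (C : Set α) : Prop :=
  M.Dep C ∧ ∀ X, X ⊂ C → M.Indep X

/-- A triangle: a 3-element circuit. -/
def IsTriangle (M : Matroid α) (T : Set α) : Prop :=
  IsCircuit M T ∧ T.encard = 3

/-- A triad: a 3-element cocircuit. -/
def IsTriad (M : Matroid α) (T : Set α) : Prop := IsTriangle M✶ T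

/-- The (extended natural number) rank of a set in a matroid: the supremum of the
cardinalities of its independent subsets. -/
noncomputable def erk (M : Matroid α) (X : Set α) : ℕ∞ :=
  ⨆ I ∈ {I : Set α | M.Indep I ∧ I ⊆ X}, I.encard

/-- Two elements are connected if they are equal or lie in a common circuit. -/
def ConnTo (M : Matroid α) (e f : α) : Prop :=
  (e = f ∧ e ∈ M.E) ∨ ∃ C, IsCircuit M C ∧ e ∈ C ∧ f ∈ C

/-- A matroid is connected if its ground set is nonempty and every two of its elements
are connected. -/
def Conn (M : Matroid α) : Prop :=
  M.E.Nonempty ∧ ∀ e ∈ M.E, ∀ f ∈ M.E, ConnTo M e f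

/-- A 2-separation of a matroid: a partition `(X, Y)` of the ground set with both sides
of size at least two and `r(X) + r(Y) - r(M) ≤ 1`. -/
def TwoSep (M : Matroid α) (X Y : Set α) : Prop :=
  X ∪ Y = M.E ∧ Disjoint X Y ∧ 2 ≤ X.encard ∧ 2 ≤ Y.encard ∧
    erk M X + erk M Y ≤ erk M M.E + 1

/-- A matroid is 3-connected if it is connected and has no 2-separation. -/
def ThreeConn (M : Matroid α) : Prop :=
  Conn M ∧ ∀ X Y, ¬ TwoSep M X Y

/-- A matroid is 3-connected up to series and parallel sets if it is connected and, for
every 2-separation `(X, Y)`, `min {r X, r Y} = 1` or `min {r✶ X, r✶ Y} = 1`. -/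
def ThreeConnUpToSP (M : Matroid α) : Prop :=
  Conn M ∧ ∀ X Y, TwoSep M X Y →
    min (erk M X) (erk M Y) = 1 ∨ min (erk M✶ X) (erk M✶ Y) = 1

/-- `N` is a minor of `M`: it is obtained from `M` by contracting a set `C` and deleting
a disjoint set `D`. -/
def IsMinor (N M : Matroid α) : Prop :=
  ∃ C D, C ⊆ M.E ∧ D ⊆ M.E ∧ Disjoint C D ∧ N = mdel (mcon M C) D

/-- `M` is isomorphic to `N`: there is a bijection between the ground sets under which
independence corresponds. -/
def IsoTo (M N : Matroid α) : Prop :=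
  ∃ f : α → α, Set.BijOn f M.E N.E ∧ ∀ I, I ⊆ M.E → (M.Indep I ↔ N.Indep (f '' I))

/-- The cyclic interval `{i, i+1, ..., j-1}` in `ZMod r`. -/
def cycArc (r : ℕ) (i j : ZMod r) : Set (ZMod r) :=
  {k | ∃ m : ℕ, m < (j - i).val ∧ k = i + (m : ZMod r)}

/-- `M` is (isomorphic to) a rank-`r` wheel for some `r ≥ 2`, i.e. the cycle matroid of
the wheel graph with `r` spokes: there is a labelling of the ground set by spokes `s i`
and rim elements `w i` so that the circuits of `M` are precisely the rim together with
the sets consisting of two spokes and the rim elements of one of the two arcs joining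
them. -/
def IsWheel (M : Matroid α) : Prop :=
  ∃ r : ℕ, 2 ≤ r ∧ ∃ s w : ZMod r → α,
    Function.Injective (Sum.elim s w) ∧
    M.E = Set.range s ∪ Set.range w ∧
    ∀ C, IsCircuit M C ↔
      (C = Set.range w ∨
        ∃ i j : ZMod r, i ≠ j ∧ C = {s i, s j} ∪ w '' cycArc r i j)

/-- `M` is (isomorphic to) a rank-`r` whirl for some `r ≥ 2`: obtained from the rank-`r`
wheel by relaxing the rim circuit; its circuits are the two-spokes-plus-arc circuits of
the wheel together with the sets consisting of the whole rim and a single spoke. -/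
def IsWhirl (M : Matroid α) : Prop :=
  ∃ r : ℕ, 2 ≤ r ∧ ∃ s w : ZMod r → α,
    Function.Injective (Sum.elim s w) ∧
    M.E = Set.range s ∪ Set.range w ∧
    ∀ C, IsCircuit M C ↔
      ((∃ i : ZMod r, C = insert (s i) (Set.range w)) ∨
        ∃ i j : ZMod r, i ≠ j ∧ C = {s i, s j} ∪ w '' cycArc r i j)

/-- A triangle if `b = true`, a triad if `b = false`. -/
def TriOrTriad (M : Matroid α) (b : Bool) (T : Set α) : Prop :=
  cond b (IsTriangle M T) (IsTriad M T)

/-- The alternation pattern of a fan, recorded as a list: position `i` (zero-based)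
carries a spoke element iff `fanBool b i = true`, where `b` records whether the first
triple of the fan is a triangle. -/
def fanBool (b : Bool) (i : ℕ) : Bool := if i % 2 = 0 then b else !b

/-- `F` is a fan of `M` whose first triple is a triangle if `b = true` (so that the
first element is a spoke element) and a triad if `b = false`: a list of at least three
distinct elements of the ground set in which every three consecutive elements form
alternately triangles and triads. -/
def IsFanWith (M : Matroid α) (b : Bool) (F : List α) : Prop :=
  3 ≤ F.length ∧ F.Nodup ∧ (∀ x ∈ F, x ∈ M.E) ∧
  ∀ (l₁ : List α) (x y z : α) (l₂ : List α), F = l₁ ++ x :: y :: z :: l₂ →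
    TriOrTriad M (fanBool b l₁.length) {x, y, z}

/-- `F` is a fan of `M`. -/
def IsFan (M : Matroid α) (F : List α) : Prop := ∃ b, IsFanWith M b F

/-- `F` is consistent with `F'`: `F` is a (not necessarily contiguous) subsequence of
`F'` or of its reversal. -/
def Consistent (F F' : List α) : Prop := F.Sublist F' ∨ F.Sublist F'.reverse

/-- A finite family of lists is pairwise disjoint. -/
def PairwiseDisjointLists (𝓕 : Finset (List α)) : Prop :=
  ∀ F ∈ 𝓕, ∀ G ∈ 𝓕, F ≠ G → ∀ x ∈ F, x ∉ G

/-- `𝓕` is a covering family of `M'` relative to `N` and `FN`: a family of pairwise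
disjoint fans of `M'`, of the same size as `FN`, such that every fan of `FN` is
consistent with a member of `𝓕` and every element of `E(M') - E(N)` lies in a member
of `𝓕`. -/
def CoveringFamily (N : Matroid α) (FN : Finset (List α)) (M' : Matroid α)
    (𝓕 : Finset (List α)) : Prop :=
  (∀ F ∈ 𝓕, IsFan M' F) ∧ PairwiseDisjointLists 𝓕 ∧ 𝓕.card = FN.card ∧
  (∀ F ∈ FN, ∃ F' ∈ 𝓕, Consistent F F') ∧
  (∀ x ∈ M'.E \ N.E, ∃ F ∈ 𝓕, x ∈ F)

/-- `M` is obtained from `M'` by a fan-lengthening move on the fan `F₀` of `M'`,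
producing the fan `F` of `M`: either `M' = M \ e₁` where `e₁` is a terminal spoke
element of `F`, or `M' = M / e₁` where `e₁` is a terminal rim element of `F`, or
(when `F` has at least five elements) `M' = M / eᵢ \ eᵢ₊₁` for a rim element `eᵢ`
of `F` with `1 ≤ i ≤ n - 1`; in each case `M` and `M'` are 3-connected and `F₀` is
the corresponding shortened fan. -/
def FanLengthen (M' M : Matroid α) (F₀ F : List α) : Prop :=
  ThreeConn M ∧ 4 ≤ F.length ∧ IsFan M' F₀ ∧
  ∃ b, IsFanWith M b F ∧
    ((∃ e F', F = e :: F' ∧ b = true ∧ M' = mdel M {e} ∧ ThreeConn M' ∧ F₀ = F') ∨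
     (∃ e F', F = e :: F' ∧ b = false ∧ M' = mcon M {e} ∧ ThreeConn M' ∧ F₀ = F') ∨
     (5 ≤ F.length ∧ ∃ (l₁ : List α) (x y : α) (l₂ : List α),
        F = l₁ ++ x :: y :: l₂ ∧ fanBool b l₁.length = false ∧
        M' = mdel (mcon M {x}) {y} ∧ ThreeConn M' ∧ F₀ = l₁ ++ l₂))

/-- The fan-extensions of `N` relative to the family `FN` of fans of `N`: the smallest
collection of matroids containing `N` and closed under fan-lengthening moves performed
on fans belonging to covering families. -/
inductive FanExt (N : Matroid α) (FN : Finset (List α)) : Matroid α → Prop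
  | base : FanExt N FN N
  | step (M' M : Matroid α) (𝓕 : Finset (List α)) (F₀ F : List α) :
      FanExt N FN M' → CoveringFamily N FN M' 𝓕 → F₀ ∈ 𝓕 →
      FanLengthen M' M F₀ F → FanExt N FN M

/-- The covering family `𝓕` of `M` admits a fan-shortening move: there are a matroid
`M'` having `N` as a minor and a fan `F₀` of `M'` such that `M` is obtained from `M'`
by a fan-lengthening move on `F₀` producing a fan that belongs to `𝓕`. -/
def AdmitsFanShortening (N M : Matroid α) (𝓕 : Finset (List α)) : Prop :=
  ∃ (M' : Matroid α) (F₀ F : List α), IsMinor N M' ∧ F ∈ 𝓕 ∧ FanLengthen M' M F₀ F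

/-- The alternation pattern of a fan presented as a function with one-based indices:
position `i` carries a spoke element iff `posBool b i = true`, where `b` records
whether the first triple of the fan is a triangle. -/
def posBool (b : Bool) (i : ℕ) : Bool := if i % 2 = 1 then b else !b

/-- `(e 1, ..., e n)` is a fan of `M` whose first triple is a triangle if `b = true`
(so that `e 1` is a spoke element) and a triad if `b = false`: at least three distinct
elements of the ground set in which every three consecutive elements form alternately
triangles and triads. -/
def IsFanFun (M : Matroid α) (b : Bool) (n : ℕ) (e : ℕ → α) : Prop :=
  3 ≤ n ∧ (∀ i j, 1 ≤ i → i ≤ n → 1 ≤ j → j ≤ n → e i = e j → i = j) ∧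
  (∀ i, 1 ≤ i → i ≤ n → e i ∈ M.E) ∧
  ∀ i, 1 ≤ i → i + 2 ≤ n → TriOrTriad M (posBool b i) {e i, e (i+1), e (i+2)}

/-- The set of elements of the fan `(e 1, ..., e n)`. -/
def fanSet (n : ℕ) (e : ℕ → α) : Set α := {a | ∃ i, 1 ≤ i ∧ i ≤ n ∧ a = e i}

/-- The set of rim elements of the fan `(e 1, ..., e n)` with alternation pattern `b`. -/
def rimSet (b : Bool) (n : ℕ) (e : ℕ → α) : Set α :=
  {a | ∃ i, 1 ≤ i ∧ i ≤ n ∧ posBool b i = false ∧ a = e i}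

/-- `M` is representable over the field `𝔽`. -/
def RepOver (M : Matroid α) (𝔽 : Type*) [Field 𝔽] : Prop :=
  ∃ f : α → (α → 𝔽),
    ∀ I : Set α, I ⊆ M.E → (M.Indep I ↔ LinearIndependent 𝔽 (fun x : I => f (x : α)))

/-- `M` has a minor isomorphic to a member of `𝓢`. -/
def HasSMinor (𝓢 : Set (Matroid α)) (M : Matroid α) : Prop :=
  ∃ S ∈ 𝓢, ∃ N, IsMinor N M ∧ IsoTo N S

/-- `M` is `𝓢`-fragile: for every element `e` of `M`, at least one of `M \ e` and
`M / e` has no `𝓢`-minor. -/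
def SFragile (𝓢 : Set (Matroid α)) (M : Matroid α) : Prop :=
  ∀ e ∈ M.E, ¬ HasSMinor 𝓢 (mdel M {e}) ∨ ¬ HasSMinor 𝓢 (mcon M {e})

end PaperDefs

open PaperDefs

/-- If `b ∈ X` lies in a triangle `{a, b, c}`, then `a` and `c` are spanned by the same supersets
of `X`, so each can replace the other as an addition to `X`. -/
lemma indep_insert_of_swap {M : Matroid α} {a b c : α} {X : Set α} (hC : M.IsCircuit {a, b, c})
    (hb : b ∈ X) (ha : a ∉ X) (hc : c ∉ X) (h : M.Indep (insert a X)) :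
    M.Indep (insert c X) := by
  have hX : M.Indep X := h.subset (subset_insert _ _)
  rw [hX.insert_indep_iff_of_notMem ha] at h
  rw [hX.insert_indep_iff_of_notMem hc]
  refine ⟨hC.subset_ground (by simp), fun hcl ↦ h.2 ?_⟩
  have hsub : ({a, b, c} : Set α) \ {a} ⊆ M.closure X := by
    rintro x ⟨rfl | rfl | rfl, hx⟩
    · exact absurd rfl hx
    · exact M.mem_closure_of_mem hb hX.subset_ground
    · exact hcl
  exact M.closure_subset_closure_of_subset_closure hsub
    (hC.mem_closure_sdiff_singleton_of_mem (by simp))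

lemma indep_insert_swap {M : Matroid α} {a b c : α} {X : Set α} (hC : M.IsCircuit {a, b, c})
    (hb : b ∈ X) (ha : a ∉ X) (hc : c ∉ X) :
    M.Indep (insert a X) ↔ M.Indep (insert c X) := by
  refine ⟨indep_insert_of_swap hC hb ha hc, indep_insert_of_swap ?_ hb hc ha⟩
  convert hC using 1
  ext x
  simp only [mem_insert_iff, mem_singleton_iff]
  tauto

/-- A circuit meeting a cocircuit `K` meets it in at least two elements, so no circuit arises
when one element of `K` is added to an independent set avoiding `K`. -/
lemma indep_insert_of_cocircuit {M : Matroid α} {K I : Set α} {e : α} (hK : M.IsCocircuit K)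
    (hI : M.Indep I) (hIK : Disjoint I K) (he : e ∈ K) : M.Indep (insert e I) := by
  have heI : e ∉ I := fun h ↦ hIK.notMem_of_mem_left h he
  rw [hI.insert_indep_iff_of_notMem heI]
  refine ⟨hK.subset_ground he, fun hcl ↦ ?_⟩
  obtain ⟨C, hCss, hC, heC⟩ := exists_isCircuit_of_mem_closure hcl heI
  refine hC.inter_isCocircuit_ne_singleton hK (e := e) ?_
  refine Subset.antisymm ?_ (singleton_subset_iff.2 ⟨heC, he⟩)
  rintro x ⟨hxC, hxK⟩
  exact (hCss hxC).resolve_right fun hxI ↦ hIK.notMem_of_mem_left hxI hxK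

/-- The part of the fan hypothesis that the argument uses. -/
lemma fan_data {M : Matroid α} {e₁ e₂ e₃ e₄ : α} (h : IsFanWith M true [e₁, e₂, e₃, e₄]) :
    M.IsCircuit {e₁, e₂, e₃} ∧ M.IsCocircuit {e₂, e₃, e₄} ∧ [e₁, e₂, e₃, e₄].Nodup := by
  obtain ⟨-, hnd, -, h⟩ := h
  have hT : IsTriangle M {e₁, e₂, e₃} := h [] e₁ e₂ e₃ [e₄] rfl
  have hK : IsTriangle M✶ {e₂, e₃, e₄} := h [e₁] e₂ e₃ e₄ [] rfl
  exact ⟨isCircuit_iff_forall_ssubset.2 ⟨hT.1.1, fun X ↦ hT.1.2 X⟩,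
    isCircuit_iff_forall_ssubset.2 ⟨hK.1.1, fun X ↦ hK.1.2 X⟩, hnd⟩

/-- When `X` avoids `e₁`, `e₂` and `e₃`, independence of `insert e₁ X` is expressed by a set
avoiding `e₁`. -/
lemma indep_insert_iff_of_avoids {M : Matroid α} {e₁ e₂ e₃ e₄ : α} {X : Set α}
    (hT : M.IsCircuit {e₁, e₂, e₃}) (hK : M.IsCocircuit {e₂, e₃, e₄})
    (hnd : [e₁, e₂, e₃, e₄].Nodup) (h₁ : e₁ ∉ X) (h₂ : e₂ ∉ X) (h₃ : e₃ ∉ X) :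
    M.Indep (insert e₁ X) ↔ M.Indep (insert e₃ (insert e₂ (X \ {e₄}))) := by
  simp only [List.nodup_cons, List.mem_cons, List.not_mem_nil, or_false, not_or] at hnd
  obtain ⟨⟨h12, h13, h14⟩, ⟨h23, h24⟩, h34, -⟩ := hnd
  have hdisj : Disjoint (insert e₁ (X \ {e₄})) {e₂, e₃, e₄} := by
    rw [disjoint_left]
    rintro x (rfl | ⟨hx, hx4⟩) (rfl | rfl | rfl) <;> contradiction
  have hadd : ∀ e ∈ ({e₂, e₃, e₄} : Set α), M.Indep (insert e₁ (X \ {e₄})) →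
      M.Indep (insert e (insert e₁ (X \ {e₄}))) :=
    fun e he hI ↦ indep_insert_of_cocircuit hK hI hdisj he
  have hdrop : M.Indep (insert e₁ X) ↔ M.Indep (insert e₁ (X \ {e₄})) := by
    refine ⟨fun h ↦ h.subset (insert_subset_insert sdiff_subset), fun h ↦ ?_⟩
    refine (hadd e₄ (by simp) h).subset ?_
    rw [insert_comm, insert_sdiff_singleton]
    exact insert_subset_insert (subset_insert _ _)
  have hplus : M.Indep (insert e₁ (X \ {e₄})) ↔ M.Indep (insert e₁ (insert e₂ (X \ {e₄}))) := by
    rw [insert_comm e₁ e₂]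
    exact ⟨hadd e₂ (by simp), fun h ↦ h.subset (subset_insert _ _)⟩
  rw [hdrop, hplus]
  exact indep_insert_swap hT (mem_insert _ _) (by simp [h12, h₁]) (by simp [Ne.symm h23, h₃])

/-- If `(e₁, e₂, e₃, e₄)` is a fan with `e₁` as a spoke element in both `M₁` and `M₂`,
which have the same ground set, and `M₁ \ e₁ = M₂ \ e₁`, then `M₁ = M₂`. -/
theorem statement5 (M₁ M₂ : Matroid α) (hE : M₁.E = M₂.E) (e₁ e₂ e₃ e₄ : α)
    (hfan₁ : IsFanWith M₁ true [e₁, e₂, e₃, e₄])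
    (hfan₂ : IsFanWith M₂ true [e₁, e₂, e₃, e₄])
    (hdel : mdel M₁ {e₁} = mdel M₂ {e₁}) :
    M₁ = M₂ := by
  obtain ⟨hT₁, hK₁, hnd⟩ := fan_data hfan₁
  obtain ⟨hT₂, hK₂, -⟩ := fan_data hfan₂
  have hdist := hnd
  simp only [List.nodup_cons, List.mem_cons, List.not_mem_nil, or_false, not_or] at hdist
  obtain ⟨⟨h12, h13, h14⟩, ⟨h23, h24⟩, h34, -⟩ := hdist
  have hagree : ∀ I : Set α, e₁ ∉ I → (M₁.Indep I ↔ M₂.Indep I) := by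
    have hdel_iff : ∀ (M : Matroid α) (I : Set α), e₁ ∉ I →
        (M.Indep I ↔ (mdel M {e₁}).Indep I) := by
      intro M I hI
      rw [mdel, restrict_indep_iff]
      exact ⟨fun h ↦ ⟨h, subset_sdiff_singleton h.subset_ground hI⟩, fun h ↦ h.1⟩
    intro I hI
    rw [hdel_iff M₁ I hI, hdel_iff M₂ I hI, hdel]
  refine ext_indep hE fun I _ ↦ ?_
  by_cases h₁ : e₁ ∈ I
  swap
  · exact hagree I h₁
  obtain ⟨X, hX, rfl⟩ : ∃ X, e₁ ∉ X ∧ insert e₁ X = I :=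
    ⟨I \ {e₁}, by simp, by rw [insert_sdiff_singleton, insert_eq_of_mem h₁]⟩
  by_cases h₂ : e₂ ∈ X <;> by_cases h₃ : e₃ ∈ X
  · have hsub : ({e₁, e₂, e₃} : Set α) ⊆ insert e₁ X :=
      insert_subset_insert (insert_subset h₂ (singleton_subset_iff.2 h₃))
    exact iff_of_false (fun h ↦ hT₁.not_indep (h.subset hsub))
      (fun h ↦ hT₂.not_indep (h.subset hsub))
  · rw [indep_insert_swap hT₁ h₂ hX h₃, indep_insert_swap hT₂ h₂ hX h₃]
    exact hagree _ (by simp [h13, hX])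
  · rw [pair_comm e₂ e₃] at hT₁ hT₂
    rw [indep_insert_swap hT₁ h₃ hX h₂, indep_insert_swap hT₂ h₃ hX h₂]
    exact hagree _ (by simp [h12, hX])
  · rw [indep_insert_iff_of_avoids hT₁ hK₁ hnd hX h₂ h₃,
      indep_insert_iff_of_avoids hT₂ hK₂ hnd hX h₂ h₃]
    exact hagree _ (by simp [h12, h13, hX])
end

section
/- Let N be a 3-connected matroid, representable over some field, with ground set E, |E| >= 4, and neither a wheel nor a whirl. Let F = (e_1, ..., e_n) be a fan of N. If e_1 is a rim element of F, then the local connectivity satisfies ⊓({e_1, e_2}, E − F) = 1. -/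
/-!
Write `Y` for the complement of the fan `e 1, …, e n`. Since `{e 1, e 2}` is not a parallel pair, the
claim is that adding `e 1` and `e 2` to `Y` raises the rank by exactly one. It rises by at least one
because the triad `{e 1, e 2, e 3}` is a cocircuit avoiding `Y`. For the upper bound there are two
counts: a segment of the fan running from spoke to spoke is spanned by its spokes
(`FanProof.rk_seg_two_le`), and deleting a segment running from rim to rim loses one from the rank
for each triad (`FanProof.rk_compl_seg_le`). The first bounds the rank of the fan, the second
bounds the rank of `{e 1, e 2} ∪ Y`.

If `Y` has at least two elements, 3-connectivity bounds the sum of the ranks of the fan and of `Y`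
from below, and the three inequalities together give the claim (`FanProof.rk_pair_union`).
If `Y` has at most one element, the absence of parallel and series pairs (`FanProof.pair_rk`)
takes over. For `Y` a singleton, a fan of odd length satisfies the claim by counting, and a fan of
even length leads to two contradictory values of the rank, as does a fan of odd length with `Y`
empty.

There remains a fan of even length filling the ground set. The same counts produce the missing
triangle and triad through `e 1`, so the fan closes up cyclically
(`FanProof.wheel_or_whirl_of_fan`). Orthogonality of circuits with the triads shows that a circuit
consists of two spokes and an arc of the rim joining them, or is the rim, or is the rim with one
spoke added (`FanProof.circuit_cases`). Hence the matroid is a wheel or a whirl, according to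
whether the rim is dependent.

In infinite rank `Y` has infinite rank, and both sides of the equation are `⊤`.
-/

open Matroid Set

universe u

variable {α : Type u}

open PaperDefs

namespace FanProof

/-! ### Translation to the library notions of circuit and rank -/

theorem isCircuit_iff (M : Matroid α) (C : Set α) :
    PaperDefs.IsCircuit M C ↔ M.IsCircuit C := by
  rw [Matroid.isCircuit_iff_forall_ssubset]
  exact Iff.rfl

theorem erk_eq (M : Matroid α) (X : Set α) : erk M X = M.eRk X := by
  apply le_antisymm
  · exact iSup₂_le fun I hI => hI.1.encard_le_eRk_of_subset hI.2
  · obtain ⟨I, hI⟩ := M.exists_isBasis' X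
    rw [hI.eRk_eq_encard]
    exact le_iSup₂_of_le I ⟨hI.indep, hI.subset⟩ le_rfl

/-! ### Recognising wheels and whirls -/

section Wheel

theorem mem_cycArc {k : ℕ} [NeZero k] {i j x : ZMod k} :
    x ∈ cycArc k i j ↔ (x - i).val < (j - i).val := by
  constructor
  · rintro ⟨m, hm, rfl⟩
    have hk := (j - i).val_lt
    rw [add_sub_cancel_left, ZMod.val_natCast, Nat.mod_eq_of_lt (hm.trans hk)]
    exact hm
  · intro h
    exact ⟨(x - i).val, h, by simp⟩

theorem right_notMem_cycArc {k : ℕ} [NeZero k] (i j : ZMod k) : j ∉ cycArc k i j := by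
  simp [mem_cycArc]

theorem left_mem_cycArc {k : ℕ} [NeZero k] {i j : ZMod k} (h : i ≠ j) : i ∈ cycArc k i j := by
  rw [mem_cycArc, sub_self, ZMod.val_zero, Nat.pos_iff_ne_zero, Ne, ZMod.val_eq_zero, sub_eq_zero]
  exact h.symm

variable {M : Matroid α} {k : ℕ} {s w : ZMod k → α}

/-- Two spokes together with an arc of the rim joining them. -/
def arcSet (s w : ZMod k → α) (i j : ZMod k) : Set α := {s i, s j} ∪ w '' cycArc k i j

/-- Walking along the triangles from spoke `i` to spoke `j` shows that the spoke `j` is spanned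
by the rest of the arc set. -/
theorem arcSet_not_indep [NeZero k] (hinj : Function.Injective (Sum.elim s w))
    (hE : M.E = range s ∪ range w)
    (htri : ∀ i, s (i + 1) ∈ M.closure {s i, w i}) {i j : ZMod k} (hij : i ≠ j) :
    ¬ M.Indep (arcSet s w i j) := by
  have hsw : ∀ x y, s x ≠ w y := fun x y h => by
    have := @hinj (Sum.inl x) (Sum.inr y) h
    simp at this
  have hs : Function.Injective s := fun x y h => by
    have := @hinj (Sum.inl x) (Sum.inl y) h
    simpa using this
  have key : ∀ m : ℕ, m ≤ (j - i).val →
      s (i + m) ∈ M.closure (insert (s i) (w '' cycArc k i j)) := by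
    have hsub : insert (s i) (w '' cycArc k i j) ⊆ M.E := by
      rw [hE]
      rintro x (rfl | ⟨y, -, rfl⟩) <;> simp
    intro m
    induction m with
    | zero =>
      intro _
      simpa using M.subset_closure _ hsub (mem_insert _ _)
    | succ m ih =>
      intro hm
      have h1 := htri (i + m)
      rw [Nat.cast_succ, ← add_assoc]
      refine M.closure_subset_closure_of_subset_closure ?_ h1
      rintro x (rfl | rfl)
      · exact ih (by omega)
      · exact M.subset_closure _ hsub (mem_insert_of_mem _ ⟨_, ⟨m, hm, rfl⟩, rfl⟩)
  intro hI
  have h1 := hI.notMem_closure_sdiff_of_mem (e := s j) (by simp [arcSet])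
  apply h1
  have h2 := key _ le_rfl
  rw [ZMod.natCast_zmod_val, add_sub_cancel] at h2
  refine M.closure_subset_closure ?_ h2
  rintro x (rfl | ⟨y, hy, rfl⟩)
  · exact ⟨by simp [arcSet], fun h => hij (hs h)⟩
  · exact ⟨Or.inr ⟨y, hy, rfl⟩, fun h => hsw _ _ h.symm⟩

/-- Orthogonality with the triads forces a circuit to run along the rim from one spoke to the next,
or all the way round. -/
theorem circuit_cases [NeZero k] (hinj : Function.Injective (Sum.elim s w))
    (hE : M.E = range s ∪ range w)
    (htri : ∀ i, s (i + 1) ∈ M.closure {s i, w i})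
    (hort : ∀ C, M.IsCircuit C → ∀ i x, C ∩ {w i, s (i + 1), w (i + 1)} ≠ {x})
    {C : Set α} (hC : M.IsCircuit C) :
    C = range w ∨ (∃ i, C = insert (s i) (range w)) ∨
      ∃ i j, i ≠ j ∧ C = arcSet s w i j := by
  have o1 : ∀ i, w i ∈ C → s (i + 1) ∉ C → w (i + 1) ∈ C := by
    intro i h1 h2
    by_contra h3
    apply hort C hC i (w i)
    ext x
    simp only [mem_inter_iff, mem_insert_iff, mem_singleton_iff]
    grind
  have o2 : ∀ i, w (i + 1) ∈ C → s (i + 1) ∉ C → w i ∈ C := by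
    intro i h1 h2
    by_contra h3
    apply hort C hC i (w (i + 1))
    ext x
    simp only [mem_inter_iff, mem_insert_iff, mem_singleton_iff]
    grind
  have o3 : ∀ i, s (i + 1) ∈ C → w i ∈ C ∨ w (i + 1) ∈ C := by
    intro i h1
    by_contra! h3
    apply hort C hC i (s (i + 1))
    ext x
    simp only [mem_inter_iff, mem_insert_iff, mem_singleton_iff]
    grind
  by_cases hsp : ∃ i, s i ∈ C
  · -- some spoke of `C` is followed by a rim element of `C`
    have hstart : ∃ i, s i ∈ C ∧ w i ∈ C := by
      obtain ⟨i, hi⟩ := hsp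
      have hx : ∃ x, w x ∈ C := by
        have := o3 (i - 1) (by simpa using hi)
        tauto
      obtain ⟨x, hx⟩ := hx
      have hex : ∃ m : ℕ, s (x - m) ∈ C := ⟨(x - i).val, by simpa using hi⟩
      classical
      have hw : ∀ m : ℕ, m ≤ Nat.find hex → w (x - m) ∈ C := by
        intro m
        induction m with
        | zero => intro _; simpa using hx
        | succ m ih =>
          intro hm
          have h1 := ih (by omega)
          have h2 := Nat.find_min hex (m := m) (by omega)
          have e1 : x - (m + 1 : ℕ) + 1 = x - m := by push_cast; ring
          apply o2 (x - (m + 1 : ℕ))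
          · rwa [e1]
          · rwa [e1]
      exact ⟨_, Nat.find_spec hex, hw _ le_rfl⟩
    obtain ⟨i, hi, hwi⟩ := hstart
    have hex : ∃ m : ℕ, s (i + (m + 1 : ℕ)) ∈ C := ⟨k - 1, by
      rw [Nat.sub_add_cancel (NeZero.one_le)]; simpa using hi⟩
    classical
    have hw : ∀ m : ℕ, m ≤ Nat.find hex → w (i + m) ∈ C := by
      intro m
      induction m with
      | zero => intro _; simpa using hwi
      | succ m ih =>
        intro hm
        have h1 := ih (by omega)
        have h2 := Nat.find_min hex (m := m) (by omega)
        rw [Nat.cast_succ, ← add_assoc] at h2 ⊢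
        exact o1 _ h1 h2
    have hspec := Nat.find_spec hex
    by_cases hlt : Nat.find hex + 1 < k
    · right; right
      have hval : ((Nat.find hex + 1 : ℕ) : ZMod k).val = Nat.find hex + 1 := by
        rw [ZMod.val_natCast, Nat.mod_eq_of_lt hlt]
      have hne : i ≠ i + (Nat.find hex + 1 : ℕ) := by
        intro h
        have h0 : ((Nat.find hex + 1 : ℕ) : ZMod k) = 0 := by
          simpa using h.symm
        rw [h0] at hval
        simp at hval
      refine ⟨i, i + (Nat.find hex + 1 : ℕ), hne, ?_⟩
      refine (hC.eq_of_not_indep_subset (arcSet_not_indep hinj hE htri hne) ?_).symm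
      rintro x ((rfl | rfl) | ⟨y, ⟨m, hm, rfl⟩, rfl⟩)
      · exact hi
      · exact hspec
      · rw [add_sub_cancel_left, hval] at hm
        exact hw m (by omega)
    · right; left
      refine ⟨i, subset_antisymm ?_ ?_⟩
      · intro x hx
        have hxE := hC.subset_ground hx
        rw [hE] at hxE
        obtain ⟨y, rfl⟩ | ⟨y, rfl⟩ := hxE
        · by_cases hyi : y = i
          · rw [hyi]; exact mem_insert _ _
          · exfalso
            have h0 : (y - i).val ≠ 0 := by
              rw [Ne, ZMod.val_eq_zero, sub_eq_zero]; exact hyi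
            have h1 := (y - i).val_lt
            refine Nat.find_min hex (m := (y - i).val - 1) (by omega) ?_
            rw [Nat.sub_add_cancel (by omega)]
            simpa using hx
        · exact mem_insert_of_mem _ ⟨y, rfl⟩
      · rintro x (rfl | ⟨y, rfl⟩)
        · exact hi
        · have h1 := (y - i).val_lt
          have := hw (y - i).val (by omega)
          simpa using this
  · left
    push Not at hsp
    have hx : ∃ x, w x ∈ C := by
      obtain ⟨x, hx⟩ := hC.nonempty
      have hxE := hC.subset_ground hx
      rw [hE] at hxE
      obtain ⟨y, rfl⟩ | ⟨y, rfl⟩ := hxE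
      · exact absurd hx (hsp y)
      · exact ⟨y, hx⟩
    obtain ⟨x, hx⟩ := hx
    have hw : ∀ m : ℕ, w (x + m) ∈ C := by
      intro m
      induction m with
      | zero => simpa using hx
      | succ m ih =>
        rw [Nat.cast_succ, ← add_assoc]
        exact o1 _ ih (hsp _)
    refine subset_antisymm ?_ ?_
    · intro y hy
      have hyE := hC.subset_ground hy
      rw [hE] at hyE
      obtain ⟨z, rfl⟩ | h := hyE
      · exact absurd hy (hsp z)
      · exact h
    · rintro y ⟨z, rfl⟩
      simpa using hw (z - x).val

/-- A matroid of the right size and rank whose consecutive spokes and rim elements form a cyclic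
chain of triangles and triads is a wheel or a whirl, according to whether the rim is dependent. -/
theorem wheel_or_whirl (hk : 2 ≤ k) (hinj : Function.Injective (Sum.elim s w))
    (hE : M.E = range s ∪ range w)
    (htri : ∀ i, s (i + 1) ∈ M.closure {s i, w i})
    (hort : ∀ C, M.IsCircuit C → ∀ i x, C ∩ {w i, s (i + 1), w (i + 1)} ≠ {x})
    (hdep : ∀ i, ¬ M.Indep (insert (s i) (range w))) : IsWheel M ∨ IsWhirl M := by
  have : NeZero k := ⟨by omega⟩
  have hsw : ∀ x y, s x ≠ w y := fun x y h => by
    have := @hinj (Sum.inl x) (Sum.inr y) h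
    simp at this
  have hs : Function.Injective s := fun x y h => by
    have := @hinj (Sum.inl x) (Sum.inl y) h
    simpa using this
  have hw : Function.Injective w := fun x y h => by
    have := @hinj (Sum.inr x) (Sum.inr y) h
    simpa using this
  have hwarc : ∀ i j, w j ∉ arcSet s w i j := by
    rintro i j ((h | h) | ⟨y, hy, h⟩)
    · exact hsw _ _ h.symm
    · exact hsw _ _ h.symm
    · exact right_notMem_cycArc i j (hw h ▸ hy)
  have hcases : ∀ C, M.IsCircuit C → _ := fun C hC => circuit_cases hinj hE htri hort hC
  have harc : ∀ i j, i ≠ j → M.IsCircuit (arcSet s w i j) := by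
    intro i j hij
    have hAE : arcSet s w i j ⊆ M.E := by
      rw [hE]
      rintro x ((rfl | rfl) | ⟨y, -, rfl⟩) <;> simp
    have hd : M.Dep (arcSet s w i j) := ⟨arcSet_not_indep hinj hE htri hij, hAE⟩
    obtain ⟨C, hCA, hC⟩ := hd.exists_isCircuit_subset
    rcases hcases C hC with rfl | ⟨i', rfl⟩ | ⟨i', j', hij', rfl⟩
    · exact absurd (hCA ⟨j, rfl⟩) (hwarc i j)
    · exact absurd (hCA (mem_insert_of_mem _ ⟨j, rfl⟩)) (hwarc i j)
    · have hmem : ∀ x, s x ∈ arcSet s w i j → x = i ∨ x = j := by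
        rintro x ((h | h) | ⟨y, -, h⟩)
        · exact Or.inl (hs h)
        · exact Or.inr (hs h)
        · exact absurd h.symm (hsw _ _)
      have h1 := hmem i' (hCA (by simp [arcSet]))
      have h2 := hmem j' (hCA (by simp [arcSet]))
      have h3 : w i' ∈ arcSet s w i' j' := Or.inr ⟨i', left_mem_cycArc hij', rfl⟩
      rcases h1 with rfl | rfl
      · rcases h2 with rfl | rfl
        · exact absurd rfl hij'
        · exact hC
      · exact absurd (hCA h3) (hwarc _ _)
  by_cases hW : M.Indep (range w)
  · right
    refine ⟨k, hk, s, w, hinj, hE, fun C => ?_⟩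
    rw [isCircuit_iff]
    constructor
    · intro hC
      rcases hcases C hC with rfl | h | h
      · exact absurd hW hC.not_indep
      · exact Or.inl h
      · exact Or.inr h
    · rintro (⟨i, rfl⟩ | ⟨i, j, hij, rfl⟩)
      · have hd : M.Dep (insert (s i) (range w)) := ⟨hdep i, by
          rw [hE]; exact insert_subset (Or.inl ⟨i, rfl⟩) subset_union_right⟩
        obtain ⟨C, hCA, hC⟩ := hd.exists_isCircuit_subset
        have hmem : ∀ x, s x ∈ insert (s i) (range w) → x = i := by
          rintro x (h | ⟨y, h⟩)
          · exact hs h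
          · exact absurd h.symm (hsw _ _)
        rcases hcases C hC with rfl | ⟨i', rfl⟩ | ⟨i', j', hij', rfl⟩
        · exact absurd hW hC.not_indep
        · rw [hmem i' (hCA (mem_insert _ _))] at hC
          exact hC
        · have h1 := hmem i' (hCA (by simp [arcSet]))
          have h2 := hmem j' (hCA (by simp [arcSet]))
          exact absurd (h1.trans h2.symm) hij'
      · exact harc i j hij
  · left
    have hWd : M.Dep (range w) := ⟨hW, by rw [hE]; exact subset_union_right⟩
    have hWC : M.IsCircuit (range w) := by
      obtain ⟨C, hCA, hC⟩ := hWd.exists_isCircuit_subset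
      have hmem : ∀ x, s x ∉ range w := by
        rintro x ⟨y, h⟩
        exact hsw _ _ h.symm
      rcases hcases C hC with rfl | ⟨i', rfl⟩ | ⟨i', j', hij', rfl⟩
      · exact hC
      · exact absurd (hCA (mem_insert _ _)) (hmem _)
      · exact absurd (hCA (by simp [arcSet])) (hmem i')
    refine ⟨k, hk, s, w, hinj, hE, fun C => ?_⟩
    rw [isCircuit_iff]
    constructor
    · intro hC
      rcases hcases C hC with h | ⟨i, rfl⟩ | h
      · exact Or.inl h
      · refine Or.inl ?_
        exact (hC.eq_of_superset_isCircuit hWC (subset_insert _ _))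
      · exact Or.inr h
    · rintro (rfl | ⟨i, j, hij, rfl⟩)
      · exact hWC
      · exact harc i j hij

end Wheel

/-! ### Rank in matroids of finite rank -/

section Rank

/-- The rank of a set as a natural number; only meaningful in matroids of finite rank. -/
noncomputable def rk (M : Matroid α) (X : Set α) : ℕ := (M.eRk X).toNat

variable {M : Matroid α} [M.RankFinite]

theorem cast_rk (M : Matroid α) [M.RankFinite] (X : Set α) : (rk M X : ℕ∞) = M.eRk X :=
  ENat.natCast_toNat (Matroid.eRk_ne_top_iff.2 (M.isRkFinite_set X))

theorem rk_mono {X Y : Set α} (h : X ⊆ Y) : rk M X ≤ rk M Y := by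
  have := M.eRk_mono h
  rw [← cast_rk, ← cast_rk] at this
  exact_mod_cast this

theorem rk_insert_le (x : α) (X : Set α) : rk M (insert x X) ≤ rk M X + 1 := by
  have := M.eRk_insert_le_add_one x X
  rw [← cast_rk, ← cast_rk] at this
  exact_mod_cast this

theorem rk_insert_of_mem {x : α} {X : Set α} (h : x ∈ M.closure X) :
    rk M (insert x X) = rk M X := by
  have : M.eRk (insert x X) = M.eRk X := by
    rw [← M.eRk_closure_eq, Matroid.closure_insert_eq_of_mem_closure h, M.eRk_closure_eq]
  rw [← cast_rk, ← cast_rk] at this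
  exact_mod_cast this

theorem rk_insert_of_notMem {x : α} {X : Set α} (hx : x ∈ M.E) (h : x ∉ M.closure X) :
    rk M (insert x X) = rk M X + 1 := by
  have := M.eRk_insert_eq_add_one ⟨hx, h⟩
  rw [← cast_rk, ← cast_rk] at this
  exact_mod_cast this

theorem rk_le_encard (X : Set α) : (rk M X : ℕ∞) ≤ X.encard := by
  rw [cast_rk]; exact M.eRk_le_encard X

theorem rk_singleton_le (x : α) : rk M {x} ≤ 1 := by
  have := rk_le_encard (M := M) {x}
  rw [encard_singleton] at this
  exact_mod_cast this

theorem rk_pair_le (x y : α) : rk M {x, y} ≤ 2 :=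
  (rk_insert_le x {y}).trans (Nat.add_le_add_right (rk_singleton_le y) 1)

/-- An element of a cocircuit is not spanned by any set avoiding that cocircuit. -/
theorem rk_insert_of_cocircuit {K X : Set α} {c : α} (hK : M.IsCocircuit K) (hc : c ∈ K)
    (hX : Disjoint X K) : rk M (insert c X) = rk M X + 1 := by
  have hcX : c ∉ X := fun h => disjoint_left.1 hX h hc
  refine rk_insert_of_notMem (hK.subset_ground hc) fun hcl => ?_
  obtain ⟨C, hCX, hC, hcC⟩ := Matroid.exists_isCircuit_of_mem_closure hcl hcX
  apply hC.inter_isCocircuit_ne_singleton hK (e := c)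
  refine subset_antisymm ?_ (singleton_subset_iff.2 ⟨hcC, hc⟩)
  rintro x ⟨hxC, hxK⟩
  rcases hCX hxC with rfl | h
  · rfl
  · exact absurd hxK (disjoint_left.1 hX h)

/-- Orthogonality for a set all of whose complement's one-element extensions by members of the
set are spanning, while the complement itself is not. -/
theorem inter_ne_singleton_of_rk {K C : Set α} (hC : M.IsCircuit C)
    (hK : rk M (M.E \ K) < rk M M.E)
    (hK' : ∀ x ∈ K, rk M M.E ≤ rk M (M.E \ (K \ {x}))) (x : α) : C ∩ K ≠ {x} := by
  intro h
  have hx : x ∈ C ∩ K := h.symm.subset rfl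
  have h1 : x ∈ M.closure (M.E \ K) := by
    refine M.closure_subset_closure ?_ (hC.mem_closure_sdiff_singleton_of_mem hx.1)
    rintro y ⟨hy, hyx⟩
    exact ⟨hC.subset_ground hy, fun hyK => hyx (h.subset ⟨hy, hyK⟩)⟩
  have h2 := rk_insert_of_mem h1
  have h3 : rk M (M.E \ (K \ {x})) ≤ rk M (insert x (M.E \ K)) := by
    apply rk_mono
    rintro y ⟨hy, hyK⟩
    by_cases hyx : y = x
    · exact Or.inl hyx
    · exact Or.inr ⟨hy, fun h => hyK ⟨h, hyx⟩⟩
  have := hK' x hx.2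
  omega

/-- 3-connectivity, read as a lower bound on the connectivity function. -/
theorem rk_add_rk_compl (h3 : ThreeConn M) {X : Set α} (hX : X ⊆ M.E)
    (h2 : 2 ≤ X.encard) (h2' : 2 ≤ (M.E \ X).encard) :
    rk M M.E + 2 ≤ rk M X + rk M (M.E \ X) := by
  by_contra hlt
  apply h3.2 X (M.E \ X)
  refine ⟨union_sdiff_cancel hX, disjoint_sdiff_right, h2, h2', ?_⟩
  rw [erk_eq, erk_eq, erk_eq, ← cast_rk, ← cast_rk, ← cast_rk]
  norm_cast
  omega

/-- In a 3-connected matroid with at least four elements there are no parallel pairs and no series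
pairs. -/
theorem pair_rk (h3 : ThreeConn M) (h4 : 4 ≤ M.E.encard) {a b : α} (ha : a ∈ M.E) (hb : b ∈ M.E)
    (hab : a ≠ b) : rk M {a, b} = 2 ∧ rk M (M.E \ {a, b}) = rk M M.E := by
  have hsub : {a, b} ⊆ M.E := by
    rintro x (rfl | rfl) <;> assumption
  have hcard : ({a, b} : Set α).encard = 2 := encard_pair hab
  have h := encard_sdiff_add_encard_of_subset hsub
  have h2 : 2 ≤ (M.E \ {a, b}).encard := by
    rw [← h, hcard] at h4
    have : (2 : ℕ∞) + 2 ≤ (M.E \ {a, b}).encard + 2 := by norm_num; exact h4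
    exact (ENat.add_le_add_iff_right (by simp)).1 this
  have h5 := rk_add_rk_compl h3 hsub hcard.ge h2
  have h6 : rk M (M.E \ {a, b}) ≤ rk M M.E := rk_mono sdiff_subset
  have h7 := rk_pair_le (M := M) a b
  omega

end Rank

/-! ### Ranks of segments of a fan -/

section Segments

/-- The elements of the sequence `e` with indices from `i` to `j`. -/
def seg (e : ℕ → α) (i j : ℕ) : Set α := {a | ∃ m, i ≤ m ∧ m ≤ j ∧ a = e m}

variable {M : Matroid α} [M.RankFinite] {n : ℕ} {e : ℕ → α}

theorem fanSet_eq_seg (n : ℕ) (e : ℕ → α) : fanSet n e = seg e 1 n := rfl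

theorem mem_seg {i j m : ℕ} (h : i ≤ m) (h' : m ≤ j) : e m ∈ seg e i j := ⟨m, h, h', rfl⟩

theorem seg_subset_insert {i j : ℕ} : seg e i (j + 1) ⊆ insert (e (j + 1)) (seg e i j) := by
  rintro x ⟨m, h1, h2, rfl⟩
  rcases Nat.eq_or_lt_of_le h2 with h | h
  · rw [h]; exact mem_insert _ _
  · exact mem_insert_of_mem _ (mem_seg h1 (by omega))

theorem rk_seg_succ_le {i j : ℕ} : rk M (seg e i (j + 1)) ≤ rk M (seg e i j) + 1 :=
  (rk_mono seg_subset_insert).trans (rk_insert_le _ _)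

theorem rk_seg_one_le {j : ℕ} : rk M (seg e 1 j) ≤ rk M (seg e 2 j) + 1 := by
  refine le_trans (rk_mono ?_) (rk_insert_le (e 1) (seg e 2 j))
  rintro x ⟨m, h1, h2, rfl⟩
  rcases Nat.eq_or_lt_of_le h1 with h | h
  · rw [← h]; exact mem_insert _ _
  · exact mem_insert_of_mem _ (mem_seg (by omega) (by omega))

/-- Consecutive spokes span the rim element between them, so a segment from spoke to spoke is
spanned by its spokes. -/
theorem rk_seg_two_le (hmem : ∀ i, 1 ≤ i → i ≤ n → e i ∈ M.E)
    (htri : ∀ m, 1 ≤ m → 2 * m + 2 ≤ n → M.IsCircuit {e (2 * m), e (2 * m + 1), e (2 * m + 2)})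
    (m : ℕ) (hm : 1 ≤ m) (hmn : 2 * m ≤ n) : rk M (seg e 2 (2 * m)) ≤ m := by
  induction m, hm using Nat.le_induction with
  | base =>
    refine le_trans (rk_mono ?_) (rk_singleton_le (M := M) (e 2))
    rintro x ⟨m, h1, h2, rfl⟩
    rw [show m = 2 by omega]; rfl
  | succ m hm ih =>
    have h1 := ih (by omega)
    set X := insert (e (2 * m + 2)) (seg e 2 (2 * m)) with hX
    have hXE : X ⊆ M.E := by
      rintro x (rfl | ⟨t, ht1, ht2, rfl⟩)
      · exact hmem _ (by omega) (by omega)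
      · exact hmem _ (by omega) (by omega)
    have h2 : rk M X ≤ m + 1 := (rk_insert_le _ _).trans (by omega)
    have hcl : e (2 * m + 1) ∈ M.closure X := by
      refine M.closure_subset_closure ?_ ((htri m hm (by omega)).mem_closure_sdiff_singleton_of_mem
        (e := e (2 * m + 1)) (by simp))
      rintro x ⟨rfl | rfl | rfl, hx⟩
      · exact Or.inr (mem_seg (by omega) le_rfl)
      · exact absurd rfl hx
      · exact Or.inl rfl
    rw [← rk_insert_of_mem hcl] at h2
    refine le_trans (rk_mono ?_) h2
    rintro x ⟨t, ht1, ht2, rfl⟩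
    rcases (by omega : t = 2 * m + 1 ∨ t = 2 * m + 2 ∨ t ≤ 2 * m) with h | h | h
    · exact Or.inl (by rw [h])
    · exact Or.inr (Or.inl (by rw [h]))
    · exact Or.inr (Or.inr (mem_seg ht1 h))

/-- Deleting a segment from rim to rim loses at least one from the rank for each of its triads. -/
theorem rk_compl_seg_le (hmem : ∀ i, 1 ≤ i → i ≤ n → e i ∈ M.E)
    (hcot : ∀ m, 2 * m + 3 ≤ n → M.IsCocircuit {e (2 * m + 1), e (2 * m + 2), e (2 * m + 3)})
    (hinj : ∀ i j, 1 ≤ i → i ≤ n → 1 ≤ j → j ≤ n → e i = e j → i = j)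
    (t m : ℕ) (hmn : 2 * t + 1 + 2 * m ≤ n) :
    rk M (M.E \ seg e (2 * t + 1) (2 * t + 1 + 2 * m)) + m ≤ rk M M.E := by
  induction m with
  | zero => exact rk_mono sdiff_subset
  | succ m ih =>
    have h1 := ih (by omega)
    have hK := hcot (t + m) (by omega)
    set i := 2 * t + 1
    rw [show 2 * (t + m) + 1 = i + 2 * m by omega, show 2 * (t + m) + 2 = i + 2 * m + 1 by omega,
      show 2 * (t + m) + 3 = i + 2 * m + 2 by omega] at hK
    have h2 := rk_insert_of_cocircuit (X := M.E \ seg e i (i + 2 * (m + 1)))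
      (c := e (i + 2 * m + 2)) hK (by simp) (by
        rw [disjoint_left]
        rintro x ⟨-, hx⟩ (rfl | rfl | rfl) <;> exact hx (mem_seg (by omega) (by omega)))
    have h3 : rk M (insert (e (i + 2 * m + 2)) (M.E \ seg e i (i + 2 * (m + 1))))
        ≤ rk M (M.E \ seg e i (i + 2 * m)) := by
      apply rk_mono
      rintro x (rfl | ⟨hxE, hx⟩)
      · refine ⟨hmem _ (by omega) (by omega), ?_⟩
        rintro ⟨j, hj1, hj2, hj⟩
        have := hinj _ _ (by omega) (by omega) (by omega) (by omega) hj
        omega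
      · refine ⟨hxE, ?_⟩
        rintro ⟨j, hj1, hj2, rfl⟩
        exact hx (mem_seg hj1 (by omega))
    omega

end Segments

/-! ### Fans that exhaust the ground set -/

/-- A fan of even length that is the whole ground set closes up cyclically, with one further triad
and one further triangle through `e 1`, so that the matroid is a wheel or a whirl. -/
theorem wheel_or_whirl_of_fan {M : Matroid α} [M.RankFinite] {k : ℕ} {e : ℕ → α}
    (h3 : ThreeConn M) (h4 : 4 ≤ M.E.encard) (hk : 2 ≤ k)
    (hmem : ∀ i, 1 ≤ i → i ≤ 2 * k → e i ∈ M.E)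
    (hinj : ∀ i j, 1 ≤ i → i ≤ 2 * k → 1 ≤ j → j ≤ 2 * k → e i = e j → i = j)
    (htri : ∀ m, 1 ≤ m → 2 * m + 2 ≤ 2 * k →
      M.IsCircuit {e (2 * m), e (2 * m + 1), e (2 * m + 2)})
    (hcot : ∀ m, 2 * m + 3 ≤ 2 * k → M.IsCocircuit {e (2 * m + 1), e (2 * m + 2), e (2 * m + 3)})
    (hE : M.E ⊆ seg e 1 (2 * k)) : IsWheel M ∨ IsWhirl M := by
  have hne : ∀ i j, 1 ≤ i → i ≤ 2 * k → 1 ≤ j → j ≤ 2 * k → i ≠ j → e i ≠ e j :=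
    fun i j h1 h2 h3 h4 h h' => h (hinj i j h1 h2 h3 h4 h')
  have hpair : ∀ i j, 1 ≤ i → i ≤ 2 * k → 1 ≤ j → j ≤ 2 * k → i ≠ j →
      rk M {e i, e j} = 2 ∧ rk M (M.E \ {e i, e j}) = rk M M.E :=
    fun i j a b c d h => pair_rk h3 h4 (hmem i a b) (hmem j c d) (hne i j a b c d h)
  have hA := rk_seg_two_le hmem htri
  have hB := rk_compl_seg_le hmem hcot hinj
  have hle : rk M M.E ≤ k := by
    rw [← (hpair 1 3 (by omega) (by omega) (by omega) (by omega) (by omega)).2]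
    refine le_trans (rk_mono ?_) (hA k (by omega) le_rfl)
    rintro x ⟨hx, hx'⟩
    obtain ⟨m, h1, h2, rfl⟩ := hE hx
    refine mem_seg ?_ h2
    by_contra hm
    exact hx' (Or.inl (by rw [show m = 1 by omega]))
  have hge : k ≤ rk M M.E := by
    have h := hB 0 (k - 1) (by omega)
    have h1 : rk M {e (2 * k)} ≤
        rk M (M.E \ seg e (2 * 0 + 1) (2 * 0 + 1 + 2 * (k - 1))) := by
      apply rk_mono
      rintro x rfl
      refine ⟨hmem _ (by omega) le_rfl, ?_⟩
      rintro ⟨j, hj1, hj2, hj⟩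
      have := hinj _ _ (by omega) (by omega) (by omega) (by omega) hj
      omega
    have h2 := rk_insert_le (M := M) (e 1) {e (2 * k)}
    have h3 := (hpair 1 (2 * k) (by omega) (by omega) (by omega) (by omega) (by omega)).1
    omega
  -- the triangle that closes the fan
  have htri0 : e 2 ∈ M.closure {e (2 * k), e 1} := by
    by_contra hcl
    have h := rk_insert_of_notMem (hmem 2 (by omega) (by omega)) hcl
    have h1 := (hpair (2 * k) 1 (by omega) (by omega) (by omega) (by omega) (by omega)).1
    have h2 := hB 1 (k - 2) (by omega)
    have h5 : rk M (insert (e 2) {e (2 * k), e 1}) ≤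
        rk M (M.E \ seg e (2 * 1 + 1) (2 * 1 + 1 + 2 * (k - 2))) := by
      apply rk_mono
      have aux : ∀ m, 1 ≤ m → m ≤ 2 * k → (m < 3 ∨ m = 2 * k) →
          e m ∈ M.E \ seg e (2 * 1 + 1) (2 * 1 + 1 + 2 * (k - 2)) := by
        intro m hm1 hm2 hm
        refine ⟨hmem _ hm1 hm2, ?_⟩
        rintro ⟨j, hj1, hj2, hj⟩
        have := hinj _ _ (by omega) (by omega) (by omega) (by omega) hj
        omega
      rintro x (rfl | rfl | rfl) <;> exact aux _ (by omega) (by omega) (by omega)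
    omega
  -- the triad that closes the fan
  have hcot0 : rk M (M.E \ {e (2 * k - 1), e (2 * k), e 1}) < rk M M.E := by
    have h := hA (k - 1) (by omega) (by omega)
    refine lt_of_le_of_lt (rk_mono (Y := seg e 2 (2 * (k - 1))) ?_) (by omega)
    rintro x ⟨hx, hx'⟩
    obtain ⟨m, h1, h2, rfl⟩ := hE hx
    refine mem_seg ?_ ?_
    · by_contra hm
      exact hx' (Or.inr (Or.inr (by rw [show m = 1 by omega]; rfl)))
    · by_contra hm
      rcases (by omega : m = 2 * k - 1 ∨ m = 2 * k) with rfl | rfl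
      · exact hx' (Or.inl rfl)
      · exact hx' (Or.inr (Or.inl rfl))
  have hort0 : ∀ C, M.IsCircuit C → ∀ x, C ∩ {e (2 * k - 1), e (2 * k), e 1} ≠ {x} := by
    intro C hC x
    refine inter_ne_singleton_of_rk hC hcot0 ?_ x
    have aux : ∀ i j, 1 ≤ i → i ≤ 2 * k → 1 ≤ j → j ≤ 2 * k → i ≠ j → ∀ y,
        ({e (2 * k - 1), e (2 * k), e 1} : Set α) \ {y} ⊆ {e i, e j} →
        rk M M.E ≤ rk M (M.E \ (({e (2 * k - 1), e (2 * k), e 1} : Set α) \ {y})) := by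
      intro i j a b c d hij y hy
      rw [← (hpair i j a b c d hij).2]
      exact rk_mono (sdiff_subset_sdiff_right hy)
    rintro y (rfl | rfl | rfl)
    · refine aux (2 * k) 1 (by omega) (by omega) (by omega) (by omega) (by omega) _ ?_
      rintro z ⟨rfl | rfl | rfl, hz⟩ <;> simp at hz ⊢
    · refine aux (2 * k - 1) 1 (by omega) (by omega) (by omega) (by omega) (by omega) _ ?_
      rintro z ⟨rfl | rfl | rfl, hz⟩ <;> simp at hz ⊢
    · refine aux (2 * k - 1) (2 * k) (by omega) (by omega) (by omega) (by omega) (by omega) _ ?_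
      rintro z ⟨rfl | rfl | rfl, hz⟩ <;> simp at hz ⊢
  have : NeZero k := ⟨by omega⟩
  have : Fact (1 < k) := ⟨by omega⟩
  -- index in the fan of the rim element `w i`, the last of which is `e 1`
  let p : ℕ → ℕ := fun m => if m + 1 = k then 1 else 2 * m + 3
  have hp : ∀ m, m < k → 1 ≤ p m ∧ p m ≤ 2 * k ∧ p m % 2 = 1 := by
    intro m hm
    simp only [p]
    split_ifs <;> omega
  have hpinj : ∀ m m', m < k → m' < k → p m = p m' → m = m' := by
    intro m m' hm hm'
    simp only [p]
    split_ifs <;> omega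
  let s : ZMod k → α := fun i => e (2 * i.val + 2)
  let w : ZMod k → α := fun i => e (p i.val)
  have hsucc : ∀ i : ZMod k, (i + 1).val = if i.val + 1 = k then 0 else i.val + 1 := by
    intro i
    have := i.val_lt
    rw [ZMod.val_add, ZMod.val_one]
    split_ifs with h
    · rw [h, Nat.mod_self]
    · exact Nat.mod_eq_of_lt (by omega)
  have hswinj : Function.Injective (Sum.elim s w) := by
    rintro (x | x) (y | y) h
    all_goals
      have hx := x.val_lt
      have hy := y.val_lt
      have hpx := hp _ hx
      have hpy := hp _ hy
      simp only [Sum.elim_inl, Sum.elim_inr, s, w] at h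
      have h' := hinj _ _ (by omega) (by omega) (by omega) (by omega) h
    · rw [ZMod.val_injective k (by omega : x.val = y.val)]
    · omega
    · omega
    · rw [ZMod.val_injective k (hpinj _ _ hx hy h')]
  have hcast : ∀ t, t < k → ((t : ℕ) : ZMod k).val = t := fun t ht => by
    rw [ZMod.val_natCast, Nat.mod_eq_of_lt ht]
  have hEsw : M.E = range s ∪ range w := by
    apply subset_antisymm
    · intro x hx
      obtain ⟨m, h1, h2, rfl⟩ := hE hx
      have hm : m = 1 ∨ (∃ t, t + 1 < k ∧ m = 2 * t + 3) ∨ ∃ t, t < k ∧ m = 2 * t + 2 := by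
        rcases (by omega : m = 1 ∨ (3 ≤ m ∧ m % 2 = 1) ∨ m % 2 = 0) with h | h | h
        · exact Or.inl h
        · exact Or.inr (Or.inl ⟨(m - 3) / 2, by omega, by omega⟩)
        · exact Or.inr (Or.inr ⟨(m - 2) / 2, by omega, by omega⟩)
      rcases hm with rfl | ⟨t, ht, rfl⟩ | ⟨t, ht, rfl⟩
      · refine Or.inr ⟨((k - 1 : ℕ) : ZMod k), ?_⟩
        simp only [w, p, hcast (k - 1) (by omega)]
        rw [if_pos (by omega)]
      · refine Or.inr ⟨(t : ZMod k), ?_⟩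
        simp only [w, p, hcast t (by omega)]
        rw [if_neg (by omega)]
      · refine Or.inl ⟨(t : ZMod k), ?_⟩
        simp only [s, hcast t ht]
    · rintro x (⟨y, rfl⟩ | ⟨y, rfl⟩)
      · have := y.val_lt
        exact hmem _ (by omega) (by omega)
      · have := hp _ y.val_lt
        exact hmem _ (by omega) (by omega)
  refine wheel_or_whirl hk hswinj hEsw ?_ ?_ ?_
  · intro i
    have hi := i.val_lt
    simp only [s, w, p, hsucc]
    split_ifs with h
    · rw [show 2 * i.val + 2 = 2 * k by omega]
      exact htri0
    · have hC := htri (i.val + 1) (by omega) (by omega)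
      refine M.closure_subset_closure ?_ (hC.mem_closure_sdiff_singleton_of_mem
        (e := e (2 * (i.val + 1) + 2)) (by simp))
      rintro x ⟨rfl | rfl | rfl, hx⟩
      · exact Or.inl rfl
      · exact Or.inr rfl
      · exact absurd rfl hx
  · intro C hC i x
    have hi := i.val_lt
    simp only [s, w, hsucc]
    by_cases h : i.val + 1 = k
    · simp only [p, if_pos h]
      rw [if_neg (by omega)]
      exact hC.inter_isCocircuit_ne_singleton (hcot 0 (by omega))
    · by_cases h' : i.val + 2 = k
      · simp only [p, if_neg h]
        rw [if_pos (by omega), show 2 * i.val + 3 = 2 * k - 1 by omega,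
          show 2 * (i.val + 1) + 2 = 2 * k by omega]
        exact hort0 C hC x
      · simp only [p, if_neg h]
        rw [if_neg (by omega)]
        exact hC.inter_isCocircuit_ne_singleton (hcot (i.val + 1) (by omega))
  · intro i hI
    have hw : Function.Injective w := fun x y h => by
      have := @hswinj (Sum.inr x) (Sum.inr y) h
      simpa using this
    have hnot : s i ∉ range w := by
      rintro ⟨y, h⟩
      have := @hswinj (Sum.inr y) (Sum.inl i) h
      simp at this
    have h1 := hI.encard_le_eRank
    rw [encard_insert_of_notMem hnot, ← image_univ, hw.encard_image, encard_univ,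
      ENat.card_eq_coe_fintype_card, ZMod.card, ← M.eRk_ground, ← cast_rk] at h1
    norm_cast at h1
    omega

/-! ### The local connectivity -/

/-- The finite-rank case: adding `e 1` and `e 2` to the complement of the fan raises the rank by
exactly one. -/
theorem rk_pair_union {M : Matroid α} [M.RankFinite] {n : ℕ} {e : ℕ → α}
    (h3 : ThreeConn M) (h4 : 4 ≤ M.E.encard) (hn : 3 ≤ n)
    (hwheel : ¬ IsWheel M) (hwhirl : ¬ IsWhirl M)
    (hmem : ∀ i, 1 ≤ i → i ≤ n → e i ∈ M.E)
    (hinj : ∀ i j, 1 ≤ i → i ≤ n → 1 ≤ j → j ≤ n → e i = e j → i = j)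
    (htri : ∀ m, 1 ≤ m → 2 * m + 2 ≤ n →
      M.IsCircuit {e (2 * m), e (2 * m + 1), e (2 * m + 2)})
    (hcot : ∀ m, 2 * m + 3 ≤ n → M.IsCocircuit {e (2 * m + 1), e (2 * m + 2), e (2 * m + 3)}) :
    rk M ({e 1, e 2} ∪ (M.E \ seg e 1 n)) = rk M (M.E \ seg e 1 n) + 1 := by
  have hne : ∀ i j, 1 ≤ i → i ≤ n → 1 ≤ j → j ≤ n → i ≠ j → e i ≠ e j :=
    fun i j h1 h2 h3 h4 h h' => h (hinj i j h1 h2 h3 h4 h')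
  have hpair : ∀ i j, 1 ≤ i → i ≤ n → 1 ≤ j → j ≤ n → i ≠ j →
      rk M {e i, e j} = 2 ∧ rk M (M.E \ {e i, e j}) = rk M M.E :=
    fun i j a b c d h => pair_rk h3 h4 (hmem i a b) (hmem j c d) (hne i j a b c d h)
  have hA := rk_seg_two_le hmem htri
  have hB := rk_compl_seg_le hmem hcot hinj
  set Y := M.E \ seg e 1 n with hY
  have hsegE : seg e 1 n ⊆ M.E := by
    rintro x ⟨m, h1, h2, rfl⟩
    exact hmem m h1 h2
  have hlow : rk M Y + 1 ≤ rk M ({e 1, e 2} ∪ Y) := by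
    rw [← rk_insert_of_cocircuit (X := Y) (c := e 1) (hcot 0 (by omega)) (by simp) ?_]
    · apply rk_mono
      rintro x (rfl | hx)
      · simp
      · exact Or.inr hx
    · rw [disjoint_left]
      rintro x ⟨-, hx⟩ (rfl | rfl | rfl) <;> exact hx (mem_seg (by omega) (by omega))
  have hcompl : ∀ j, j ≤ n → (∀ i, j < i → i ≤ n → e i ∈ M.E \ seg e 1 j) := by
    intro j hj i h1 h2
    refine ⟨hmem _ (by omega) h2, ?_⟩
    rintro ⟨t, ht1, ht2, ht⟩
    have := hinj _ _ (by omega) (by omega) (by omega) (by omega) ht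
    omega
  have hsub3 : ∀ j, j ≤ n → {e 1, e 2} ∪ Y ⊆ M.E \ seg e 3 j := by
    intro j hj
    rintro x ((rfl | rfl) | ⟨hx, hx'⟩)
    · refine ⟨hmem _ (by omega) (by omega), ?_⟩
      rintro ⟨t, ht1, ht2, ht⟩
      have := hinj _ _ (by omega) (by omega) (by omega) (by omega) ht
      omega
    · refine ⟨hmem _ (by omega) (by omega), ?_⟩
      rintro ⟨t, ht1, ht2, ht⟩
      have := hinj _ _ (by omega) (by omega) (by omega) (by omega) ht
      omega
    · refine ⟨hx, ?_⟩
      rintro ⟨t, ht1, ht2, rfl⟩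
      exact hx' (mem_seg (by omega) (by omega))
  -- `{e 1, e 2} ∪ Y` is what remains after deleting the segment from `e 3` on
  have hup : ∀ m, 2 * m + 3 ≤ n → rk M ({e 1, e 2} ∪ Y) + m ≤ rk M M.E := by
    intro m hm
    have h1 : rk M (M.E \ seg e 3 (3 + 2 * m)) + m ≤ rk M M.E := hB 1 m (by omega)
    have h2 := rk_mono (M := M) (hsub3 (3 + 2 * m) (by omega))
    omega
  apply le_antisymm _ hlow
  obtain ⟨k, hk⟩ : ∃ k, n = 2 * k ∨ n = 2 * k + 1 := ⟨n / 2, by omega⟩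
  by_cases hY2 : 2 ≤ Y.encard
  · -- the fan has connectivity exactly two, and its rank is known up to equality
    have hF2 : 2 ≤ (seg e 1 n).encard := by
      rw [← encard_pair (hne 1 2 (by omega) (by omega) (by omega) (by omega) (by omega))]
      apply encard_le_encard
      rintro x (rfl | rfl) <;> exact mem_seg (by omega) (by omega)
    have hconn : rk M M.E + 2 ≤ rk M (seg e 1 n) + rk M Y :=
      rk_add_rk_compl h3 hsegE hF2 hY2
    have h1 : rk M (seg e 1 n) ≤ rk M (seg e 2 n) + 1 := rk_seg_one_le
    have h2 := hA k (by omega) (by omega)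
    rcases hk with rfl | rfl
    · have h5 := hup (k - 2) (by omega)
      omega
    · have h5 := hup (k - 1) (by omega)
      have h6 : rk M (seg e 2 (2 * k + 1)) ≤ rk M (seg e 2 (2 * k)) + 1 := rk_seg_succ_le
      omega
  · have hY1 : Y.encard ≤ 1 := by
      rw [not_le] at hY2
      exact ENat.lt_add_one_iff (by simp) |>.1 (by simpa [one_add_one_eq_two] using hY2)
    have hEcover : ∀ x ∈ M.E, x ∉ Y → ∃ m, 1 ≤ m ∧ m ≤ n ∧ x = e m := by
      intro x hx hxY
      by_contra hc
      exact hxY ⟨hx, hc⟩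
    rcases encard_le_one_iff_eq.1 hY1 with hY0 | ⟨x, hYx⟩
    · exfalso
      have hEF : M.E ⊆ seg e 1 n := by
        intro x hx
        exact hEcover x hx (by simp [hY0])
      rcases hk with rfl | rfl
      · rcases wheel_or_whirl_of_fan h3 h4 (by omega) hmem hinj htri hcot hEF with h | h
        · exact hwheel h
        · exact hwhirl h
      · -- the rank would be both at most `k` and at least `k + 1`
        have h1 : rk M M.E ≤ k := by
          rw [← (hpair 1 (2 * k + 1) (by omega) (by omega) (by omega) (by omega) (by omega)).2]
          refine le_trans (rk_mono ?_) (hA k (by omega) (by omega))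
          rintro x ⟨hx, hx'⟩
          obtain ⟨m, hm1, hm2, rfl⟩ := hEF hx
          refine mem_seg ?_ ?_
          · by_contra hm
            exact hx' (Or.inl (by rw [show m = 1 by omega]))
          · by_contra hm
            exact hx' (Or.inr (by rw [show m = 2 * k + 1 by omega]; rfl))
        have h2 := hB 0 (k - 1) (by omega)
        have h5 := (hpair (2 * k) (2 * k + 1) (by omega) (by omega) (by omega) (by omega)
          (by omega)).1
        have h6 : rk M {e (2 * k), e (2 * k + 1)} ≤
            rk M (M.E \ seg e (2 * 0 + 1) (2 * 0 + 1 + 2 * (k - 1))) := by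
          apply rk_mono
          rintro x (rfl | rfl) <;> exact hcompl _ (by omega) _ (by omega) (by omega)
        omega
    · have hxY : x ∈ Y := by rw [hYx]; rfl
      have hxne : ∀ i, 1 ≤ i → i ≤ n → e i ≠ x := by
        rintro i h1 h2 rfl
        exact hxY.2 (mem_seg h1 h2)
      have hpx : ∀ i, 1 ≤ i → i ≤ n →
          rk M {e i, x} = 2 ∧ rk M (M.E \ {e i, x}) = rk M M.E :=
        fun i a b => pair_rk h3 h4 (hmem i a b) hxY.1 (hxne i a b)
      have hcov : ∀ y ∈ M.E, y ≠ x → ∃ m, 1 ≤ m ∧ m ≤ n ∧ y = e m := by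
        intro y hy hyx
        exact hEcover y hy (by rw [hYx]; exact hyx)
      rcases hk with rfl | rfl
      · -- the rank would be both at most `k` and at least `k + 1`
        exfalso
        have h1 : rk M M.E ≤ k := by
          rw [← (hpx 1 (by omega) (by omega)).2]
          refine le_trans (rk_mono ?_) (hA k (by omega) (by omega))
          rintro y ⟨hy, hy'⟩
          obtain ⟨m, hm1, hm2, rfl⟩ := hcov y hy (fun h => hy' (Or.inr h))
          refine mem_seg ?_ hm2
          by_contra hm
          exact hy' (Or.inl (by rw [show m = 1 by omega]))
        have h2 := hB 0 (k - 1) (by omega)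
        have h5 := (hpx (2 * k) (by omega) (by omega)).1
        have h6 : rk M {e (2 * k), x} ≤
            rk M (M.E \ seg e (2 * 0 + 1) (2 * 0 + 1 + 2 * (k - 1))) := by
          apply rk_mono
          rintro y (rfl | rfl)
          · exact hcompl _ (by omega) _ (by omega) (by omega)
          · refine ⟨hxY.1, ?_⟩
            rintro ⟨t, ht1, ht2, ht⟩
            exact hxne t (by omega) (by omega) ht.symm
        omega
      · have h1 : rk M M.E ≤ k + 1 := by
          rw [← (hpx (2 * k + 1) (by omega) (by omega)).2]
          have h2 : rk M (seg e 1 (2 * k)) ≤ rk M (seg e 2 (2 * k)) + 1 := rk_seg_one_le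
          have h5 := hA k (by omega) (by omega)
          refine le_trans (rk_mono ?_) (h2.trans (by omega))
          rintro y ⟨hy, hy'⟩
          obtain ⟨m, hm1, hm2, rfl⟩ := hcov y hy (fun h => hy' (Or.inr h))
          refine mem_seg hm1 ?_
          by_contra hm
          exact hy' (Or.inl (by rw [show m = 2 * k + 1 by omega]))
        have h2 := hup (k - 1) (by omega)
        have h5 := (hpx 1 (by omega) (by omega)).1
        have h6 := rk_insert_le (M := M) (e 1) {x}
        rw [← hYx] at h6 h5
        omega

end FanProof

/-- If `F = (e 1, ..., e n)` is a fan of the representable 3-connected matroid `N`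
(which is neither a wheel nor a whirl and has at least four elements) and `e 1` is a
rim element, then the local connectivity between `{e 1, e 2}` and `E - F` is one. -/
theorem statement6 (N : Matroid α) (hN3 : ThreeConn N)
    (𝔽 : Type*) [Field 𝔽] (hrep : RepOver N 𝔽)
    (hNcard : 4 ≤ N.E.encard) (hNwheel : ¬ IsWheel N) (hNwhirl : ¬ IsWhirl N)
    (b : Bool) (n : ℕ) (e : ℕ → α) (hfan : IsFanFun N b n e)
    (hrim : posBool b 1 = false) :
    erk N {e 1, e 2} + erk N (N.E \ fanSet n e)
      = erk N ({e 1, e 2} ∪ (N.E \ fanSet n e)) + 1 := by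
  obtain ⟨hn, hinj, hmem, hpat⟩ := hfan
  have hb : b = false := by simpa [posBool] using hrim
  subst hb
  have htri : ∀ m, 1 ≤ m → 2 * m + 2 ≤ n →
      N.IsCircuit {e (2 * m), e (2 * m + 1), e (2 * m + 2)} := by
    intro m hm hmn
    have h := hpat (2 * m) (by omega) hmn
    have hp : posBool false (2 * m) = true := by simp [posBool]
    rw [hp] at h
    exact (FanProof.isCircuit_iff _ _).1 h.1
  have hcot : ∀ m, 2 * m + 3 ≤ n →
      N.IsCocircuit {e (2 * m + 1), e (2 * m + 2), e (2 * m + 3)} := by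
    intro m hmn
    have h := hpat (2 * m + 1) (by omega) hmn
    have hp : posBool false (2 * m + 1) = false := by simp [posBool]
    rw [hp] at h
    exact (FanProof.isCircuit_iff _ _).1 h.1
  rw [FanProof.erk_eq, FanProof.erk_eq, FanProof.erk_eq, FanProof.fanSet_eq_seg]
  by_cases hfin : N.RankFinite
  · have h12 : e 1 ≠ e 2 := fun h => by
      have := hinj 1 2 (by omega) (by omega) (by omega) (by omega) h
      omega
    have h1 := (FanProof.pair_rk hN3 hNcard (hmem 1 (by omega) (by omega))
      (hmem 2 (by omega) (by omega)) h12).1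
    have h2 := FanProof.rk_pair_union hN3 hNcard hn hNwheel hNwhirl hmem hinj htri hcot
    rw [← FanProof.cast_rk, ← FanProof.cast_rk, ← FanProof.cast_rk]
    norm_cast
    omega
  · -- in infinite rank the complement of the finite fan has infinite rank, and both sides are `⊤`
    have htop : N.eRk (N.E \ FanProof.seg e 1 n) = ⊤ := by
      have hF : (FanProof.seg e 1 n).Finite := by
        refine ((Set.finite_Iic n).image e).subset ?_
        rintro x ⟨m, -, hm, rfl⟩
        exact ⟨m, hm, rfl⟩
      rw [Matroid.eRk_eq_top_iff]
      intro h
      apply hfin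
      rw [← Matroid.isRkFinite_ground_iff_rankFinite]
      exact (h.union (N.isRkFinite_of_finite hF)).subset (fun x hx => by
        by_cases hxF : x ∈ FanProof.seg e 1 n
        · exact Or.inr hxF
        · exact Or.inl ⟨hx, hxF⟩)
    have htop' : N.eRk ({e 1, e 2} ∪ (N.E \ FanProof.seg e 1 n)) = ⊤ :=
      top_le_iff.1 (htop ▸ N.eRk_mono subset_union_right)
    rw [htop, htop']
    simp
end

section
/- Let N be a 3-connected matroid, representable over some field, with ground set E, |E| >= 4, and neither a wheel nor a whirl. Let F = (e_1, ..., e_n) be a fan of N, and let R be the set of rim elements of F. Then the local connectivity satisfies ⊓(R, E − F) = 1. -/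
/-!
Let `F` be a fan with rim `R` and set of spokes `S`, and let `X = E - F`. Running along the
triangles, `F` is spanned by `R` and one spoke, so `r(F) ≤ r(R) + 1 ≤ |R| + 1`; dually
`r✶(F) ≤ |S| + 1`. If `|X| ≥ 2`, then 3-connectedness gives
`2 ≤ r(F) + r(X) - r(M) = r(F) + r✶(F) - |F|`, so equality holds throughout: `R` is independent, `S`
is coindependent and `r(X) = r(M) + 1 - |R|` (`FanWindow.core`). Since `S` is coindependent,
`R ∪ X = E - S` is spanning, and `⊓(R, X) = |R| + (r(M) + 1 - |R|) - r(M) = 1`.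

If `|X| ≤ 1`, the matroid is a wheel or a whirl. Order the elements as the fan followed by the
remaining element, if any. Subfans missing two elements bound the rank and corank from below, so
the number of elements is `2m` with rank and corank `m` (`FanWindow.exists_eRank`). A subfan missing
three elements has a complement of rank two or of corank two by `FanWindow.core`, so the cyclic
sequence closes up: all cyclically consecutive triples are alternately triangles and triads
(`FanWindow.isCircuit_cyclic`). In such a matroid two spokes together with an arc of rim elements
between them always form a circuit, and orthogonality with the triads shows that every circuit not
containing the whole rim has this form. The matroid is a wheel if the rim is dependent and a whirl
otherwise (`isWheel_or_isWhirl`).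

In infinite rank both sides of the identity are infinite because a fan is finite.
-/

open Matroid Set

universe u

variable {α : Type u}

open PaperDefs

namespace FanAux

/-! ### Translation to Mathlib's rank and circuits -/

lemma erk_eq (M : Matroid α) (X : Set α) : erk M X = M.eRk X := by
  refine le_antisymm ?_ ?_
  · refine iSup₂_le fun I hI => ?_
    exact hI.1.encard_le_eRk_of_subset hI.2
  · obtain ⟨I, hIX, hI, h⟩ := Matroid.le_eRk_iff.1 (le_refl (M.eRk X))
    rw [← h]
    exact le_iSup₂ (f := fun (I : Set α) (_ : I ∈ {I : Set α | M.Indep I ∧ I ⊆ X}) => I.encard)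
      I ⟨hI, hIX⟩

lemma isCircuit_iff (M : Matroid α) (C : Set α) : PaperDefs.IsCircuit M C ↔ M.IsCircuit C :=
  Matroid.isCircuit_iff_forall_ssubset.symm

/-- The part of 3-connectedness that the argument uses: no partition of the ground set into two
parts of size at least two has connectivity at most one. -/
def NoTwoSep (M : Matroid α) : Prop :=
  ∀ A ⊆ M.E, 2 ≤ A.encard → 2 ≤ (M.E \ A).encard →
    M.eRank + 2 ≤ M.eRk A + M.eRk (M.E \ A)

lemma noTwoSep_of_threeConn {M : Matroid α} [M.RankFinite] (h : ThreeConn M) : NoTwoSep M := by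
  intro A hA h2 h2'
  have h' := h.2 A (M.E \ A)
  by_contra hlt
  refine h' ⟨union_sdiff_cancel hA, disjoint_sdiff_right, h2, h2', ?_⟩
  rw [erk_eq, erk_eq, erk_eq, Matroid.eRk_ground]
  by_contra hgt
  apply hlt
  have := Order.add_one_le_of_lt (not_le.1 hgt)
  rw [add_assoc] at this
  exact this

lemma NoTwoSep.dual {M : Matroid α} [M.Finite] (h : NoTwoSep M) : NoTwoSep M✶ := by
  intro A hA h2 h2'
  rw [Matroid.dual_ground] at hA h2' ⊢
  have h0 := h A hA h2 h2'
  have h1 := M.eRk_dual_add_eRank A hA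
  have h3 := M.eRk_dual_add_eRank (M.E \ A) sdiff_subset
  rw [sdiff_sdiff_cancel_left hA] at h3
  have h4 := M.eRank_add_eRank_dual
  have h5 := encard_sdiff_add_encard_of_subset hA
  have hf := M.ground_finite
  obtain ⟨r, hr⟩ := ENat.ne_top_iff_exists.1 ((Matroid.eRank_ne_top_iff M).2 inferInstance)
  obtain ⟨d, hd⟩ := ENat.ne_top_iff_exists.1 ((Matroid.eRank_ne_top_iff M✶).2 inferInstance)
  obtain ⟨rA, hrA⟩ := ENat.ne_top_iff_exists.1 (Matroid.eRk_ne_top_iff.2 (M.isRkFinite_set A))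
  obtain ⟨rX, hrX⟩ := ENat.ne_top_iff_exists.1
    (Matroid.eRk_ne_top_iff.2 (M.isRkFinite_set (M.E \ A)))
  obtain ⟨dA, hdA⟩ := ENat.ne_top_iff_exists.1 (Matroid.eRk_ne_top_iff.2 (M✶.isRkFinite_set A))
  obtain ⟨dX, hdX⟩ := ENat.ne_top_iff_exists.1
    (Matroid.eRk_ne_top_iff.2 (M✶.isRkFinite_set (M.E \ A)))
  obtain ⟨a, ha⟩ := ENat.ne_top_iff_exists.1 (encard_ne_top_iff.2 (hf.subset hA))
  obtain ⟨x, hx⟩ := ENat.ne_top_iff_exists.1 (encard_ne_top_iff.2 (hf.subset (sdiff_subset (t := A))))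
  obtain ⟨c, hc⟩ := ENat.ne_top_iff_exists.1 (encard_ne_top_iff.2 hf)
  rw [← hr, ← hrA, ← hrX] at h0
  rw [← hdA, ← hr, ← hrX, ← ha] at h1
  rw [← hdX, ← hr, ← hrA, ← hx] at h3
  rw [← hr, ← hd, ← hc] at h4
  rw [← ha, ← hx, ← hc] at h5
  rw [← hd, ← hdA, ← hdX]
  norm_cast at *
  omega

lemma mem_closure_of_triangle {M : Matroid α} {x y z : α} {X : Set α}
    (h : M.IsCircuit {x, y, z}) (hx : x ∈ M.closure X) (hy : y ∈ M.closure X) :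
    z ∈ M.closure X := by
  have h1 := h.mem_closure_sdiff_singleton_of_mem (e := z) (by simp)
  refine M.closure_subset_closure_of_subset_closure ?_ h1
  rintro w ⟨hw, hwz⟩
  rcases hw with rfl | rfl | rfl
  · exact hx
  · exact hy
  · exact absurd rfl hwz

/-! ### Fans as windows of a sequence -/

/-- The entries of `e` with indices in `[a, a + n)` form a fan of `M`, except that lengths below
three are allowed. Index `i` is a spoke iff `sp i = true`; indexing by windows of one sequence
makes subfans immediate. -/
structure FanWindow (M : Matroid α) (sp : ℕ → Bool) (e : ℕ → α) (a n : ℕ) : Prop where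
  alt : ∀ i, sp (i + 1) = !sp i
  inj : InjOn e (Ico a (a + n))
  mem : ∀ i, a ≤ i → i < a + n → e i ∈ M.E
  tri : ∀ i, a ≤ i → i + 2 < a + n → sp i = true → M.IsCircuit {e i, e (i + 1), e (i + 2)}
  triad : ∀ i, a ≤ i → i + 2 < a + n → sp i = false → M✶.IsCircuit {e i, e (i + 1), e (i + 2)}

lemma FanWindow.dual {M : Matroid α} {sp : ℕ → Bool} {e : ℕ → α} {a n : ℕ}
    (h : FanWindow M sp e a n) : FanWindow M✶ (fun i => !sp i) e a n where
  alt i := by simp [h.alt i]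
  inj := h.inj
  mem := h.mem
  tri i hi hi' hs := h.triad i hi hi' (by simpa using hs)
  triad i hi hi' hs := by
    rw [Matroid.dual_dual]
    exact h.tri i hi hi' (by simpa using hs)

lemma FanWindow.mono {M : Matroid α} {sp : ℕ → Bool} {e : ℕ → α} {a n a' n' : ℕ}
    (h : FanWindow M sp e a n) (ha : a ≤ a') (hn : a' + n' ≤ a + n) :
    FanWindow M sp e a' n' where
  alt := h.alt
  inj := h.inj.mono (Ico_subset_Ico ha hn)
  mem i hi hi' := h.mem i (by omega) (by omega)
  tri i hi hi' hs := h.tri i (by omega) (by omega) hs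
  triad i hi hi' hs := h.triad i (by omega) (by omega) hs

/-- The entries of the window `[a, a + n)` whose index `i` has `sp i = c`: the spokes for
`c = true`, the rim elements for `c = false`. -/
def part (sp : ℕ → Bool) (e : ℕ → α) (c : Bool) (a n : ℕ) : Set α :=
  e '' {i | i ∈ Ico a (a + n) ∧ sp i = c}

lemma part_dual (sp : ℕ → Bool) (e : ℕ → α) (c : Bool) (a n : ℕ) :
    part (fun i => !sp i) e c a n = part sp e (!c) a n := by
  unfold part
  congr 1
  ext i
  cases c <;> simp

lemma part_subset (sp : ℕ → Bool) (e : ℕ → α) (c : Bool) (a n : ℕ) :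
    part sp e c a n ⊆ e '' Ico a (a + n) := image_mono fun _ hi => hi.1

lemma part_encard_add {sp : ℕ → Bool} {e : ℕ → α} {a n : ℕ} (h : InjOn e (Ico a (a + n))) :
    (part sp e false a n).encard + (part sp e true a n).encard = n := by
  rw [part, part, (h.mono fun _ hi => hi.1).encard_image, (h.mono fun _ hi => hi.1).encard_image,
    ← encard_union_eq]
  · have : {i | i ∈ Ico a (a + n) ∧ sp i = false} ∪ {i | i ∈ Ico a (a + n) ∧ sp i = true}
        = Ico a (a + n) := by
      ext i
      cases hs : sp i <;> simp [hs]
    rw [this, ← Finset.coe_Ico, encard_coe_eq_coe_finsetCard]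
    simp
  · rw [Set.disjoint_left]
    rintro i ⟨_, h1⟩ ⟨_, h2⟩
    simp [h1] at h2

lemma part_encard {sp : ℕ → Bool} (halt : ∀ i, sp (i + 1) = !sp i) {e : ℕ → α} (c : Bool) {a n : ℕ}
    (h : InjOn e (Ico a (a + n))) :
    (part sp e c a n).encard = ((n + if sp a = c then 1 else 0) / 2 : ℕ) := by
  rw [part, (h.mono fun _ hi => hi.1).encard_image]
  clear h
  have key : {i | i ∈ Ico a (a + n) ∧ sp i = c}
      = ((Finset.Ico a (a + n)).filter fun i => sp i = c : Finset ℕ) := by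
    ext i; simp
  rw [key, encard_coe_eq_coe_finsetCard]
  norm_cast
  clear key
  induction n generalizing a with
  | zero => split_ifs <;> simp
  | succ n ih =>
    rw [show Finset.Ico a (a + (n + 1)) = insert a (Finset.Ico (a + 1) (a + 1 + n)) by
      ext i; simp; omega, Finset.filter_insert]
    have h2 := @ih (a + 1)
    rw [halt a] at h2
    have hna : a ∉ (Finset.Ico (a + 1) (a + 1 + n)).filter fun i => sp i = c := by simp
    split_ifs with hs
    · rw [Finset.card_insert_of_notMem hna, h2]
      have : ¬ ((!sp a) = c) := by rw [← hs]; simp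
      rw [if_neg this]; omega
    · rw [h2]
      have : (!sp a) = c := by revert hs; cases sp a <;> cases c <;> simp
      rw [if_pos this]

/-- A fan is spanned by its rim together with one spoke. -/
lemma FanWindow.exists_subset_closure {M : Matroid α} {sp : ℕ → Bool} {e : ℕ → α} {a n : ℕ}
    (h : FanWindow M sp e a n) (hn : 2 ≤ n) :
    ∃ s, e '' Ico a (a + n) ⊆ M.closure (insert s (part sp e false a n)) := by
  obtain ⟨i₀, hi₀, hfirst⟩ : ∃ i₀, (a ≤ i₀ ∧ i₀ < a + n) ∧
      ∀ i, a ≤ i → i < a + 2 → sp i = true → i = i₀ := by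
    have := h.alt a
    cases hs : sp a with
    | true =>
      refine ⟨a, by omega, fun i h1 h2 h3 => ?_⟩
      by_contra hne
      obtain rfl : i = a + 1 := by omega
      simp [this, hs] at h3
    | false =>
      refine ⟨a + 1, by omega, fun i h1 h2 h3 => ?_⟩
      by_contra hne
      obtain rfl : i = a := by omega
      simp [hs] at h3
  refine ⟨e i₀, ?_⟩
  have key : ∀ i, a ≤ i → i < a + n → e i ∈ M.closure (insert (e i₀) (part sp e false a n)) := by
    intro i
    induction i using Nat.strong_induction_on with
    | _ i ih =>
      intro h1 h2
      cases hs : sp i with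
      | false =>
        exact M.mem_closure_of_mem' (mem_insert_of_mem _ ⟨i, ⟨⟨h1, h2⟩, hs⟩, rfl⟩) (h.mem i h1 h2)
      | true =>
        by_cases h3 : i < a + 2
        · rw [hfirst i h1 h3 hs]
          exact M.mem_closure_of_mem' (mem_insert _ _) (h.mem _ hi₀.1 hi₀.2)
        · obtain ⟨j, rfl⟩ : ∃ j, i = j + 2 := ⟨i - 2, by omega⟩
          have hj : sp j = true := by
            have h4 := h.alt j
            have h5 := h.alt (j + 1)
            rw [h4, hs] at h5
            simpa using h5.symm
          exact mem_closure_of_triangle (h.tri j (by omega) h2 hj)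
            (ih j (by omega) (by omega) (by omega)) (ih (j + 1) (by omega) (by omega) (by omega))
  rintro _ ⟨i, hi, rfl⟩
  exact key i hi.1 hi.2

lemma FanWindow.eRk_le {M : Matroid α} {sp : ℕ → Bool} {e : ℕ → α} {a n : ℕ}
    (h : FanWindow M sp e a n) (hn : 2 ≤ n) :
    M.eRk (e '' Ico a (a + n)) ≤ M.eRk (part sp e false a n) + 1 := by
  obtain ⟨s, hs⟩ := h.exists_subset_closure hn
  calc M.eRk (e '' Ico a (a + n)) ≤ M.eRk (M.closure (insert s (part sp e false a n))) :=
        M.eRk_mono hs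
    _ = M.eRk (insert s (part sp e false a n)) := M.eRk_closure_eq _
    _ ≤ _ := M.eRk_insert_le_add_one _ _

/-- The rank computation for a fan `F` with rim `R` and spokes `S`. One has `r(F) ≤ |R| + 1` and
`r✶(F) ≤ |S| + 1`, whereas 3-connectedness gives `r(F) + r✶(F) - |F| ≥ 2`; hence all these
inequalities are equalities. -/
lemma FanWindow.core {M : Matroid α} [M.RankFinite] (hM : NoTwoSep M) {sp : ℕ → Bool} {e : ℕ → α}
    {a n : ℕ} (h : FanWindow M sp e a n) (hn : 2 ≤ n)
    (hX : 2 ≤ (M.E \ e '' Ico a (a + n)).encard) :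
    M.Indep (part sp e false a n) ∧ M✶.Indep (part sp e true a n) ∧
    M.eRk (e '' Ico a (a + n)) = (part sp e false a n).encard + 1 ∧
    M.eRk (M.E \ e '' Ico a (a + n)) + (part sp e false a n).encard = M.eRank + 1 := by
  have hFE : e '' Ico a (a + n) ⊆ M.E := by
    rintro _ ⟨i, hi, rfl⟩
    exact h.mem i hi.1 hi.2
  have hFfin : (e '' Ico a (a + n)).Finite := (finite_Ico _ _).image _
  have hFcard : (e '' Ico a (a + n)).encard = n := by
    rw [h.inj.encard_image, ← Finset.coe_Ico, encard_coe_eq_coe_finsetCard]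
    simp
  have hRfin := hFfin.subset (part_subset sp e false a n)
  have hSfin := hFfin.subset (part_subset sp e true a n)
  have h1 := h.eRk_le hn
  have h2 := h.dual.eRk_le hn
  rw [part_dual, Bool.not_false] at h2
  have h3 := M.eRk_le_encard (part sp e false a n)
  have h4 := M✶.eRk_le_encard (part sp e true a n)
  have h5 := part_encard_add (sp := sp) h.inj
  have h6 := M.eRk_dual_add_eRank _ hFE
  have h7 := hM _ hFE (by rw [hFcard]; exact_mod_cast hn) hX
  rw [Matroid.indep_iff_eRk_eq_encard_of_finite hRfin,
    Matroid.indep_iff_eRk_eq_encard_of_finite hSfin]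
  rw [hFcard] at h6
  obtain ⟨r, hr⟩ := ENat.ne_top_iff_exists.1 ((Matroid.eRank_ne_top_iff M).2 inferInstance)
  obtain ⟨rF, hrF⟩ := ENat.ne_top_iff_exists.1
    (Matroid.eRk_ne_top_iff.2 (M.isRkFinite_set (e '' Ico a (a + n))))
  obtain ⟨rR, hrR⟩ := ENat.ne_top_iff_exists.1
    (Matroid.eRk_ne_top_iff.2 (M.isRkFinite_set (part sp e false a n)))
  obtain ⟨rX, hrX⟩ := ENat.ne_top_iff_exists.1
    (Matroid.eRk_ne_top_iff.2 (M.isRkFinite_set (M.E \ e '' Ico a (a + n))))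
  obtain ⟨dF, hdF⟩ := ENat.ne_top_iff_exists.1
    (Matroid.eRk_ne_top_iff.2 (M✶.isRkFinite_of_finite hFfin))
  obtain ⟨dS, hdS⟩ := ENat.ne_top_iff_exists.1
    (Matroid.eRk_ne_top_iff.2 (M✶.isRkFinite_of_finite hSfin))
  obtain ⟨R, hR⟩ := ENat.ne_top_iff_exists.1 (encard_ne_top_iff.2 hRfin)
  obtain ⟨S, hS⟩ := ENat.ne_top_iff_exists.1 (encard_ne_top_iff.2 hSfin)
  rw [← hrF, ← hrR] at h1
  rw [← hdF, ← hdS] at h2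
  rw [← hrR, ← hR] at h3
  rw [← hdS, ← hS] at h4
  rw [← hR, ← hS] at h5
  rw [← hdF, ← hr, ← hrX] at h6
  rw [← hr, ← hrF, ← hrX] at h7
  rw [← hrR, ← hdS, ← hrF, ← hrX, ← hr, ← hR, ← hS]
  norm_cast at *
  omega

end FanAux

namespace FanAux

/-! ### Recognising wheels and whirls -/

section Cyclic

variable {M : Matroid α} {m : ℕ} {s w : ZMod m → α}

lemma natCast_inj_of_lt {m a b : ℕ} (ha : a < m) (hb : b < m) (h : (a : ZMod m) = b) : a = b := by
  rw [ZMod.natCast_eq_natCast_iff', Nat.mod_eq_of_lt ha, Nat.mod_eq_of_lt hb] at h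
  exact h

/-- Along an arc of rim elements, one end spoke is spanned iff the other is. -/
lemma spoke_mem_closure_iff (tri : ∀ i, M.IsCircuit {s i, w i, s (i + 1)}) {X : Set α}
    (p : ZMod m) (d : ℕ) (h : ∀ u < d, w (p + (u : ℕ)) ∈ M.closure X) :
    s p ∈ M.closure X ↔ s (p + (d : ℕ)) ∈ M.closure X := by
  induction d with
  | zero => simp
  | succ d ih =>
    rw [ih fun u hu => h u (by omega)]
    have ht := tri (p + (d : ℕ))
    have hw := h d (by omega)
    rw [Nat.cast_succ, ← add_assoc]
    refine ⟨fun h1 => mem_closure_of_triangle ht h1 hw, fun h1 => ?_⟩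
    rw [show ({s (p + (d : ℕ)), w (p + (d : ℕ)), s (p + (d : ℕ) + 1)} : Set α)
      = {s (p + (d : ℕ) + 1), w (p + (d : ℕ)), s (p + (d : ℕ))} by ext; simp; tauto] at ht
    exact mem_closure_of_triangle ht h1 hw

lemma spanning_of_spokes (tri : ∀ i, M.IsCircuit {s i, w i, s (i + 1)})
    (hE : M.E = range s ∪ range w) {X : Set α} (h : ∀ i, s i ∈ M.closure X) :
    M.E ⊆ M.closure X := by
  rw [hE]
  rintro _ (⟨i, rfl⟩ | ⟨i, rfl⟩)
  · exact h i
  · have ht := tri i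
    rw [show ({s i, w i, s (i + 1)} : Set α) = {s i, s (i + 1), w i} by ext; simp; tauto] at ht
    exact mem_closure_of_triangle ht (h i) (h (i + 1))

lemma indep_of_spanning [M.RankFinite] (hr : M.eRank = m) {X : Set α}
    (h : M.E ⊆ M.closure X) (hX : X.encard ≤ m) : M.Indep X := by
  refine (M.isRkFinite_set X).indep_of_encard_le_eRk ?_
  rw [← M.eRk_closure_eq, Matroid.eRk_eq_eRank h, hr]
  exact hX

lemma encard_range_rim [NeZero m] (hw : Function.Injective w) : (range w).encard = m := by
  rw [← image_univ, hw.encard_image, encard_univ]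
  simp

/-- The rim with one element replaced by a spoke is a base. -/
lemma indep_insert_spoke [NeZero m] [M.RankFinite]
    (tri : ∀ i, M.IsCircuit {s i, w i, s (i + 1)}) (hw : Function.Injective w)
    (hE : M.E = range s ∪ range w) (hr : M.eRank = m) (j k : ZMod m) :
    M.Indep (insert (s j) (range w \ {w k})) := by
  refine indep_of_spanning hr (spanning_of_spokes tri hE ?_) ?_
  · have key : ∀ q, s (k + 1) ∈ M.closure (insert (s j) (range w \ {w k})) ↔
        s q ∈ M.closure (insert (s j) (range w \ {w k})) := by
      intro q
      have h := spoke_mem_closure_iff (X := insert (s j) (range w \ {w k})) tri (k + 1)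
        (q - (k + 1)).val ?_
      · rw [ZMod.natCast_zmod_val, add_sub_cancel] at h
        exact h
      · intro u hu
        refine M.mem_closure_of_mem' (mem_insert_of_mem _ ⟨mem_range_self _, fun h => ?_⟩)
          (by rw [hE]; exact Or.inr (mem_range_self _))
        have h1 : ((u + 1 : ℕ) : ZMod m) = (0 : ℕ) := by
          have := hw h
          push_cast
          linear_combination this
        have h2 := ZMod.val_lt (q - (k + 1))
        -- `u + 1 = m` is excluded as `u < (q - (k + 1)).val < m`
        have := natCast_inj_of_lt (by omega) (by omega) h1
        omega
    intro q
    rw [← key q, key j]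
    exact M.mem_closure_of_mem' (mem_insert _ _) (by rw [hE]; exact Or.inl (mem_range_self _))
  · refine (encard_insert_le _ _).trans ?_
    rw [encard_sdiff_singleton_add_one (mem_range_self k), encard_range_rim hw]

/-- The set of two spokes and all rim elements except one from each of the two arcs between them
is independent. -/
lemma indep_insert_two_spokes [NeZero m] [M.RankFinite]
    (tri : ∀ i, M.IsCircuit {s i, w i, s (i + 1)}) (hw : Function.Injective w)
    (hE : M.E = range s ∪ range w) (hr : M.eRank = m) (i : ZMod m) (u D : ℕ) (hu : u < D)
    (hD : D < m) :
    M.Indep (insert (s i) (insert (s (i + (D : ℕ)))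
      ((range w \ {w (i + (D : ℕ))}) \ {w (i + (u : ℕ))}))) := by
  set X := insert (s i) (insert (s (i + (D : ℕ)))
      ((range w \ {w (i + (D : ℕ))}) \ {w (i + (u : ℕ))})) with hX
  have hwX : ∀ v : ℕ, v < m → v ≠ u → v ≠ D → w (i + (v : ℕ)) ∈ M.closure X := by
    intro v hv h1 h2
    refine M.mem_closure_of_mem' ?_ (by rw [hE]; exact Or.inr (mem_range_self _))
    refine mem_insert_of_mem _ (mem_insert_of_mem _ ⟨⟨mem_range_self _, fun h => ?_⟩, fun h => ?_⟩)
    · exact h2 (natCast_inj_of_lt hv hD (add_left_cancel (hw h)))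
    · exact h1 (natCast_inj_of_lt hv (by omega) (add_left_cancel (hw h)))
  have hi : s i ∈ M.closure X :=
    M.mem_closure_of_mem' (mem_insert _ _) (by rw [hE]; exact Or.inl (mem_range_self _))
  have hj : s (i + (D : ℕ)) ∈ M.closure X :=
    M.mem_closure_of_mem' (mem_insert_of_mem _ (mem_insert _ _))
      (by rw [hE]; exact Or.inl (mem_range_self _))
  refine indep_of_spanning hr (spanning_of_spokes tri hE ?_) ?_
  · intro q
    obtain ⟨t, ht, rfl⟩ : ∃ t : ℕ, t < m ∧ q = i + (t : ℕ) :=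
      ⟨(q - i).val, ZMod.val_lt _, by rw [ZMod.natCast_zmod_val]; ring⟩
    rcases le_or_gt t u with h1 | h1
    · exact (spoke_mem_closure_iff tri i t fun v hv => hwX v (by omega) (by omega) (by omega)).1 hi
    rcases le_or_gt t D with h2 | h2
    · refine (spoke_mem_closure_iff tri (i + (t : ℕ)) (D - t) fun v hv => ?_).2 ?_
      · rw [add_assoc, ← Nat.cast_add]
        exact hwX _ (by omega) (by omega) (by omega)
      · rw [add_assoc, ← Nat.cast_add, Nat.add_sub_cancel' h2]
        exact hj
    · refine (spoke_mem_closure_iff tri (i + (t : ℕ)) (m - t) fun v hv => ?_).2 ?_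
      · rw [add_assoc, ← Nat.cast_add]
        exact hwX _ (by omega) (by omega) (by omega)
      · rw [add_assoc, ← Nat.cast_add, Nat.add_sub_cancel' ht.le]
        simpa using hi
  · have h1 : ((range w \ {w (i + (D : ℕ))}) \ {w (i + (u : ℕ))}).encard + 1
        = (range w \ {w (i + (D : ℕ))}).encard := by
      refine encard_sdiff_singleton_add_one ⟨mem_range_self _, fun h => ?_⟩
      have := natCast_inj_of_lt (by omega) hD (add_left_cancel (hw h))
      omega
    have h2 : (range w \ {w (i + (D : ℕ))}).encard + 1 = (range w).encard :=
      encard_sdiff_singleton_add_one (mem_range_self _)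
    calc X.encard ≤ (insert (s (i + (D : ℕ)))
          ((range w \ {w (i + (D : ℕ))}) \ {w (i + (u : ℕ))})).encard + 1 := encard_insert_le _ _
      _ ≤ _ + 1 + 1 := by gcongr; exact encard_insert_le _ _
      _ = m := by rw [h1, h2, encard_range_rim hw]

/-- Two spokes together with an arc of the rim joining them form a circuit. -/
lemma isCircuit_arc [NeZero m] [M.RankFinite]
    (tri : ∀ i, M.IsCircuit {s i, w i, s (i + 1)}) (hsw : Function.Injective (Sum.elim s w))
    (hE : M.E = range s ∪ range w) (hr : M.eRank = m) {i j : ZMod m} (hij : i ≠ j) :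
    M.IsCircuit ({s i, s j} ∪ w '' cycArc m i j) := by
  have hw : Function.Injective w := hsw.comp Sum.inr_injective
  have hs : Function.Injective s := hsw.comp Sum.inl_injective
  have hne : ∀ a b, s a ≠ w b := fun a b h => by
    have := @hsw (Sum.inl a) (Sum.inr b) h
    simp at this
  obtain ⟨D, hD, rfl⟩ : ∃ t : ℕ, t < m ∧ j = i + (t : ℕ) :=
    ⟨(j - i).val, ZMod.val_lt _, by rw [ZMod.natCast_zmod_val]; ring⟩
  have hval : (i + (D : ℕ) - i).val = D := by
    rw [add_sub_cancel_left, ZMod.val_natCast_of_lt hD]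
  have hDnot : ∀ u < D, w (i + (u : ℕ)) ≠ w (i + (D : ℕ)) := fun u hu h => by
    have := natCast_inj_of_lt (by omega) hD (add_left_cancel (hw h))
    omega
  have hsub : {s i, s (i + (D : ℕ))} ∪ w '' cycArc m i (i + (D : ℕ)) ⊆ M.E := by
    rw [hE]
    rintro _ ((rfl | rfl) | ⟨k, -, rfl⟩)
    · exact Or.inl (mem_range_self _)
    · exact Or.inl (mem_range_self _)
    · exact Or.inr (mem_range_self _)
  rw [Matroid.isCircuit_iff_dep_forall_sdiff_singleton_indep]
  refine ⟨⟨fun hI => ?_, hsub⟩, ?_⟩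
  · have hmem : s (i + (D : ℕ)) ∈ {s i, s (i + (D : ℕ))} ∪ w '' cycArc m i (i + (D : ℕ)) := by simp
    refine hI.notMem_closure_sdiff_of_mem hmem ?_
    refine (spoke_mem_closure_iff tri i D fun u hu => ?_).1 ?_
    · refine M.mem_closure_of_mem' ⟨Or.inr ⟨_, ⟨u, by rwa [hval], rfl⟩, rfl⟩, fun h => ?_⟩
        (by rw [hE]; exact Or.inr (mem_range_self _))
      exact hne _ _ h.symm
    · exact M.mem_closure_of_mem' ⟨by simp, fun h => hij (hs h)⟩
        (by rw [hE]; exact Or.inl (mem_range_self _))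
  · rintro x ((rfl | rfl) | ⟨_, ⟨u, hu, rfl⟩, rfl⟩)
    · refine (indep_insert_spoke tri hw hE hr (i + (D : ℕ)) (i + (D : ℕ))).subset ?_
      rintro _ ⟨(rfl | rfl) | ⟨_, ⟨v, hv, rfl⟩, rfl⟩, hx⟩
      · exact absurd rfl hx
      · exact mem_insert _ _
      · rw [hval] at hv
        exact mem_insert_of_mem _ ⟨mem_range_self _, hDnot v hv⟩
    · refine (indep_insert_spoke tri hw hE hr i (i + (D : ℕ))).subset ?_
      rintro _ ⟨(rfl | rfl) | ⟨_, ⟨v, hv, rfl⟩, rfl⟩, hx⟩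
      · exact mem_insert _ _
      · exact absurd rfl hx
      · rw [hval] at hv
        exact mem_insert_of_mem _ ⟨mem_range_self _, hDnot v hv⟩
    · rw [hval] at hu
      refine (indep_insert_two_spokes tri hw hE hr i u D hu hD).subset ?_
      rintro _ ⟨(rfl | rfl) | ⟨_, ⟨v, hv, rfl⟩, rfl⟩, hx⟩
      · exact mem_insert _ _
      · exact mem_insert_of_mem _ (mem_insert _ _)
      · rw [hval] at hv
        exact mem_insert_of_mem _ (mem_insert_of_mem _
          ⟨⟨mem_range_self _, hDnot v hv⟩, fun h => hx h⟩)

/-- Orthogonality: a circuit cannot meet a triad in exactly one element. -/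
lemma mem_of_triad {C : Set α} {x y z : α} (hC : M.IsCircuit C) (hK : M✶.IsCircuit {x, y, z})
    (hx : x ∈ C) (hy : y ∉ C) : z ∈ C := by
  by_contra hz
  refine hC.inter_isCocircuit_ne_singleton (K := {x, y, z}) hK (e := x) ?_
  ext t
  simp only [mem_inter_iff, mem_insert_iff, mem_singleton_iff]
  constructor
  · rintro ⟨h1, rfl | rfl | rfl⟩
    · rfl
    · exact absurd h1 hy
    · exact absurd h1 hz
  · rintro rfl
    exact ⟨hx, Or.inl rfl⟩

/-- A circuit that misses some rim element consists of two spokes and an arc between them: starting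
from a spoke, orthogonality with the triads forces consecutive rim elements into the circuit until
the next spoke is met. -/
lemma exists_arc_of_isCircuit [NeZero m] [M.RankFinite]
    (tri : ∀ i, M.IsCircuit {s i, w i, s (i + 1)})
    (triad : ∀ i, M✶.IsCircuit {w i, s (i + 1), w (i + 1)})
    (hsw : Function.Injective (Sum.elim s w))
    (hE : M.E = range s ∪ range w) (hr : M.eRank = m) {C : Set α} (hC : M.IsCircuit C)
    {k : ZMod m} (hk : w k ∉ C) :
    ∃ i j : ZMod m, i ≠ j ∧ C = {s i, s j} ∪ w '' cycArc m i j := by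
  have hw : Function.Injective w := hsw.comp Sum.inr_injective
  suffices ∃ i : ZMod m, ∃ t : ℕ, 1 ≤ t ∧ t ≤ m ∧ s i ∈ C ∧ s (i + (t : ℕ)) ∈ C ∧
      ∀ u < t, w (i + (u : ℕ)) ∈ C by
    obtain ⟨i, t, ht1, htm, hi, hj, hu⟩ := this
    have htm' : t < m := by
      refine lt_of_le_of_ne htm fun h => hk ?_
      have := hu (k - i).val (by rw [h]; exact ZMod.val_lt _)
      rwa [ZMod.natCast_zmod_val, add_sub_cancel] at this
    have hij : i ≠ i + (t : ℕ) := fun h => by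
      have := natCast_inj_of_lt (m := m) htm' (b := 0) (by omega)
        (by push_cast; linear_combination -h)
      omega
    refine ⟨i, i + (t : ℕ), hij, ?_⟩
    refine ((isCircuit_arc tri hsw hE hr hij).eq_of_subset_isCircuit hC ?_).symm
    rintro _ ((rfl | rfl) | ⟨_, ⟨v, hv, rfl⟩, rfl⟩)
    · exact hi
    · exact hj
    · rw [add_sub_cancel_left, ZMod.val_natCast_of_lt htm'] at hv
      exact hu v hv
  -- the circuit contains a spoke, since the rim without `w k` is independent
  obtain ⟨i, hi⟩ : ∃ i, s i ∈ C := by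
    by_contra hno
    push Not at hno
    refine hC.not_indep ((indep_insert_spoke tri hw hE hr k k).subset ?_)
    intro x hx
    have := hC.subset_ground hx
    rw [hE] at this
    rcases this with ⟨i, rfl⟩ | ⟨i, rfl⟩
    · exact absurd hx (hno i)
    · refine mem_insert_of_mem _ ⟨mem_range_self _, fun h => hk ?_⟩
      rw [← hw h]
      exact hx
  by_cases hwi : w i ∈ C
  · -- forward from `s i`
    classical
    have hex : ∃ t : ℕ, 1 ≤ t ∧ s (i + (t : ℕ)) ∈ C :=
      ⟨m, NeZero.one_le, by simpa using hi⟩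
    refine ⟨i, Nat.find hex, (Nat.find_spec hex).1,
      Nat.find_min' hex ⟨NeZero.one_le, by simpa using hi⟩, hi, (Nat.find_spec hex).2, ?_⟩
    intro u
    induction u with
    | zero => intro _; simpa using hwi
    | succ u ih =>
      intro hu
      have hns : s (i + (u : ℕ) + 1) ∉ C := fun h => by
        refine Nat.find_min hex hu ⟨by omega, ?_⟩
        push_cast
        rwa [← add_assoc]
      have := mem_of_triad hC (triad (i + (u : ℕ))) (ih (by omega)) hns
      push_cast
      rwa [← add_assoc]
  · -- backward from `s i`
    classical
    have hwi' : w (i - 1) ∈ C := by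
      have h1 := triad (i - 1)
      rw [sub_add_cancel, show ({w (i - 1), s i, w i} : Set α) = {s i, w i, w (i - 1)} by
        ext; simp; tauto] at h1
      exact mem_of_triad hC h1 hi hwi
    have hex : ∃ t : ℕ, 1 ≤ t ∧ s (i - (t : ℕ)) ∈ C :=
      ⟨m, NeZero.one_le, by simpa using hi⟩
    have hback : ∀ u : ℕ, u < Nat.find hex → w (i - ((u + 1 : ℕ) : ZMod m)) ∈ C := by
      intro u
      induction u with
      | zero => intro _; simpa using hwi'
      | succ u ih =>
        intro hu
        have hns : s (i - ((u + 1 : ℕ) : ZMod m)) ∉ C := fun h =>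
          Nat.find_min hex hu ⟨by omega, h⟩
        have h1 := triad (i - ((u + 1 + 1 : ℕ) : ZMod m))
        rw [show i - ((u + 1 + 1 : ℕ) : ZMod m) + 1 = i - ((u + 1 : ℕ) : ZMod m) by
          push_cast; ring] at h1
        rw [show ({w (i - ((u + 1 + 1 : ℕ) : ZMod m)), s (i - ((u + 1 : ℕ) : ZMod m)),
            w (i - ((u + 1 : ℕ) : ZMod m))} : Set α) = {w (i - ((u + 1 : ℕ) : ZMod m)),
            s (i - ((u + 1 : ℕ) : ZMod m)), w (i - ((u + 1 + 1 : ℕ) : ZMod m))} by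
          ext; simp; tauto] at h1
        exact mem_of_triad hC h1 (ih (by omega)) hns
    refine ⟨i - (Nat.find hex : ℕ), Nat.find hex, (Nat.find_spec hex).1,
      Nat.find_min' hex ⟨NeZero.one_le, by simpa using hi⟩, (Nat.find_spec hex).2,
      by rwa [sub_add_cancel], ?_⟩
    intro u hu
    have h1 := hback (Nat.find hex - (u + 1)) (by omega)
    rw [show Nat.find hex - (u + 1) + 1 = Nat.find hex - u by omega, Nat.cast_sub hu.le] at h1
    convert h1 using 2
    ring

/-- A matroid of rank `m` whose ground set is a cyclic fan with `m` spokes is a wheel or a whirl,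
according to whether the rim is dependent or not. -/
lemma isWheel_or_isWhirl (hm : 2 ≤ m) [M.RankFinite]
    (tri : ∀ i, M.IsCircuit {s i, w i, s (i + 1)})
    (triad : ∀ i, M✶.IsCircuit {w i, s (i + 1), w (i + 1)})
    (hsw : Function.Injective (Sum.elim s w))
    (hE : M.E = range s ∪ range w) (hr : M.eRank = m) : IsWheel M ∨ IsWhirl M := by
  have : NeZero m := ⟨by omega⟩
  have hw : Function.Injective w := hsw.comp Sum.inr_injective
  have hne : ∀ a b, s a ≠ w b := fun a b h => by
    have := @hsw (Sum.inl a) (Sum.inr b) h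
    simp at this
  have hwE : range w ⊆ M.E := by rw [hE]; exact subset_union_right
  by_cases hR : M.Indep (range w)
  · right
    have hcirc : ∀ i, M.IsCircuit (insert (s i) (range w)) := by
      intro i
      rw [Matroid.isCircuit_iff_dep_forall_sdiff_singleton_indep]
      refine ⟨⟨fun h => ?_, insert_subset (by rw [hE]; exact Or.inl (mem_range_self _)) hwE⟩, ?_⟩
      · have h1 := h.encard_le_eRank
        rw [encard_insert_of_notMem (by rintro ⟨j, hj⟩; exact hne _ _ hj.symm),
          encard_range_rim hw, hr] at h1
        norm_cast at h1
        omega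
      · rintro x (rfl | ⟨k, rfl⟩)
        · refine hR.subset ?_
          rintro y ⟨rfl | hy, hy'⟩
          · exact absurd rfl hy'
          · exact hy
        · refine (indep_insert_spoke tri hw hE hr i k).subset ?_
          rintro y ⟨rfl | hy, hy'⟩
          · exact mem_insert _ _
          · exact mem_insert_of_mem _ ⟨hy, hy'⟩
    refine ⟨m, hm, s, w, hsw, hE, fun C => ?_⟩
    rw [isCircuit_iff]
    constructor
    · intro hC
      by_cases hwC : range w ⊆ C
      · left
        obtain ⟨x, hxC, hxw⟩ : ∃ x ∈ C, x ∉ range w := by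
          by_contra hno
          push Not at hno
          exact hC.not_indep (hR.subset hno)
        have hx := hC.subset_ground hxC
        rw [hE] at hx
        obtain ⟨i, rfl⟩ := hx.resolve_right hxw
        exact ⟨i, ((hcirc i).eq_of_subset_isCircuit hC (insert_subset hxC hwC)).symm⟩
      · right
        obtain ⟨_, ⟨k, rfl⟩, hk⟩ := not_subset.1 hwC
        exact exists_arc_of_isCircuit tri triad hsw hE hr hC hk
    · rintro (⟨i, rfl⟩ | ⟨i, j, hij, rfl⟩)
      · exact hcirc i
      · exact isCircuit_arc tri hsw hE hr hij
  · left
    have hcirc : M.IsCircuit (range w) := by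
      rw [Matroid.isCircuit_iff_dep_forall_sdiff_singleton_indep]
      refine ⟨⟨hR, hwE⟩, ?_⟩
      rintro _ ⟨k, rfl⟩
      exact (indep_insert_spoke tri hw hE hr k k).subset (subset_insert _ _)
    refine ⟨m, hm, s, w, hsw, hE, fun C => ?_⟩
    rw [isCircuit_iff]
    constructor
    · intro hC
      by_cases hwC : range w ⊆ C
      · left
        exact (hcirc.eq_of_subset_isCircuit hC hwC).symm
      · right
        obtain ⟨_, ⟨k, rfl⟩, hk⟩ := not_subset.1 hwC
        exact exists_arc_of_isCircuit tri triad hsw hE hr hC hk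
    · rintro (rfl | ⟨i, j, hij, rfl⟩)
      · exact hcirc
      · exact isCircuit_arc tri hsw hE hr hij

end Cyclic

end FanAux

namespace FanAux

/-! ### Fans missing at most one element -/

section Closing

variable {M : Matroid α} {sp : ℕ → Bool} {e : ℕ → α} {a n L m : ℕ}

lemma sp_add_two_mul (halt : ∀ i, sp (i + 1) = !sp i) (i k : ℕ) : sp (i + 2 * k) = sp i := by
  induction k with
  | zero => rfl
  | succ k ih => rw [show i + 2 * (k + 1) = i + 2 * k + 1 + 1 by ring, halt, halt, ih, Bool.not_not]

lemma encard_image_Ico (h : InjOn e (Ico a (a + n))) : (e '' Ico a (a + n)).encard = n := by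
  rw [h.encard_image, ← Finset.coe_Ico, encard_coe_eq_coe_finsetCard]
  simp

lemma encard_ground (hE : M.E = e '' Ico 0 L) (hinj : InjOn e (Ico 0 L)) : M.E.encard = L := by
  have h := encard_image_Ico (a := 0) (n := L) (e := e) (by rwa [Nat.zero_add])
  rwa [Nat.zero_add, ← hE] at h

lemma two_le_encard_compl (hE : M.E = e '' Ico 0 L) (hinj : InjOn e (Ico 0 L))
    (h : InjOn e (Ico a (a + n))) (ha : a + n ≤ L) (hn : n + 2 ≤ L) :
    2 ≤ (M.E \ e '' Ico a (a + n)).encard := by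
  have hsub : e '' Ico a (a + n) ⊆ M.E := by
    rw [hE]
    exact image_mono (Ico_subset_Ico (Nat.zero_le _) ha)
  have h1 := encard_sdiff_add_encard_of_subset hsub
  rw [encard_image_Ico h, encard_ground hE hinj] at h1
  have hne : (M.E \ e '' Ico a (a + n)).encard ≠ ⊤ := fun ht => by simp [ht] at h1
  obtain ⟨x, hx⟩ := ENat.ne_top_iff_exists.1 hne
  rw [← hx] at h1 ⊢
  norm_cast at *
  omega

/-- A fan with `k` rim elements and at least two elements outside it forces rank at least
`k + 1`. -/
lemma FanWindow.le_eRank [M.RankFinite] (hM : NoTwoSep M) (hE : M.E = e '' Ico 0 L)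
    (hinj : InjOn e (Ico 0 L)) (h : FanWindow M sp e a n) (hn : 2 ≤ n) (ha : a + n ≤ L)
    (hnL : n + 2 ≤ L) :
    (((n + if sp a = false then 1 else 0) / 2 + 1 : ℕ) : ℕ∞) ≤ M.eRank := by
  obtain ⟨-, -, h1, -⟩ := h.core hM hn (two_le_encard_compl hE hinj h.inj ha hnL)
  rw [part_encard h.alt false h.inj] at h1
  rw [Nat.cast_add, Nat.cast_one, ← h1]
  exact M.eRk_le_eRank _

/-- If a fan misses at most one element, then the number of elements is even and both the rank and
the corank are half of it: subfans missing two elements bound rank and corank from below. -/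
lemma FanWindow.exists_eRank [M.Finite] (hM : NoTwoSep M) (hE : M.E = e '' Ico 0 L)
    (hinj : InjOn e (Ico 0 L)) (hL : 4 ≤ L) (h : FanWindow M sp e 0 (L - 1)) :
    ∃ m, L = 2 * m ∧ M.eRank = m ∧ M✶.eRank = m := by
  have hE' : M✶.E = e '' Ico 0 L := hE
  have hsum := M.eRank_add_eRank_dual
  rw [encard_ground hE hinj] at hsum
  obtain ⟨r, hr⟩ := ENat.ne_top_iff_exists.1 ((Matroid.eRank_ne_top_iff M).2 inferInstance)
  obtain ⟨d, hd⟩ := ENat.ne_top_iff_exists.1 ((Matroid.eRank_ne_top_iff M✶).2 inferInstance)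
  have hlow : ∀ a n, a + n ≤ L - 1 → 2 ≤ n → n + 2 ≤ L →
      (n + if sp a = false then 1 else 0) / 2 + 1 ≤ r ∧
      (n + if sp a = true then 1 else 0) / 2 + 1 ≤ d := by
    intro a n ha hn hnL
    have h' : FanWindow M sp e a n := h.mono (Nat.zero_le _) (by omega)
    have h1 := h'.le_eRank hM hE hinj hn (by omega) hnL
    have h2 := h'.dual.le_eRank hM.dual hE' hinj hn (by omega) hnL
    rw [← hr] at h1
    rw [← hd] at h2
    refine ⟨by exact_mod_cast h1, ?_⟩
    simp only [Bool.not_eq_eq_eq_not, Bool.not_false] at h2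
    exact_mod_cast h2
  rw [← hr, ← hd] at hsum ⊢
  norm_cast at hsum
  rcases Nat.even_or_odd' L with ⟨k, hk | hk⟩
  · refine ⟨k, hk, ?_⟩
    have h0 := hlow 0 (2 * k - 2) (by omega) (by omega) (by omega)
    have h1 : k ≤ r := by have := h0.1; split_ifs at this <;> omega
    have h2 : k ≤ d := by have := h0.2; split_ifs at this <;> omega
    norm_cast
    omega
  · exfalso
    have h0 := hlow 0 (2 * k - 1) (by omega) (by omega) (by omega)
    have h1 := hlow 1 (2 * k - 1) (by omega) (by omega) (by omega)
    have h2 := h.alt 0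
    rw [Nat.zero_add] at h2
    rw [h2] at h1
    cases hs : sp 0 <;> simp [hs] at h0 h1 <;> omega

lemma indep_pair [M.RankFinite] (hM : NoTwoSep M) (h4 : 4 ≤ M.E.encard) {x y : α} (hx : x ∈ M.E)
    (hy : y ∈ M.E) (hxy : x ≠ y) : M.Indep {x, y} := by
  have hsub : {x, y} ⊆ M.E := insert_subset hx (singleton_subset_iff.2 hy)
  have hc := encard_pair hxy
  have h1 := encard_sdiff_add_encard_of_subset hsub
  have h2 : 2 ≤ (M.E \ {x, y}).encard := by
    rw [← h1, hc, show (4 : ℕ∞) = 2 + 2 by norm_num] at h4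
    exact (WithTop.add_le_add_iff_right (ENat.natCast_ne_top 2)).1 h4
  have h3 := hM _ hsub hc.ge h2
  have h5 := M.eRk_le_eRank (M.E \ {x, y})
  refine (M.isRkFinite_set _).indep_of_encard_le_eRk ?_
  rw [hc]
  have hfin := (Matroid.eRank_ne_top_iff M).2 inferInstance
  have h6 : 2 + M.eRank ≤ M.eRk {x, y} + M.eRank := by
    rw [add_comm]
    exact h3.trans (by gcongr)
  exact (WithTop.add_le_add_iff_right hfin).1 h6

lemma isCircuit_of_eRk_le_two [M.RankFinite] (hM : NoTwoSep M) (h4 : 4 ≤ M.E.encard) {x y z : α}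
    (hx : x ∈ M.E) (hy : y ∈ M.E) (hz : z ∈ M.E) (hxy : x ≠ y) (hxz : x ≠ z) (hyz : y ≠ z)
    (hr : M.eRk {x, y, z} ≤ 2) : M.IsCircuit {x, y, z} := by
  rw [Matroid.isCircuit_iff_dep_forall_sdiff_singleton_indep]
  refine ⟨⟨fun hI => ?_, by simp [insert_subset_iff, *]⟩, ?_⟩
  · rw [hI.eRk_eq_encard, encard_insert_of_notMem (by simp [hxy, hxz]), encard_pair hyz] at hr
    exact absurd hr (by norm_num)
  · rintro t (rfl | rfl | rfl)
    · refine (indep_pair hM h4 hy hz hyz).subset ?_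
      rintro u ⟨rfl | rfl | rfl, hu⟩ <;> simp_all
    · refine (indep_pair hM h4 hx hz hxz).subset ?_
      rintro u ⟨rfl | rfl | rfl, hu⟩ <;> simp_all
    · refine (indep_pair hM h4 hx hy hxy).subset ?_
      rintro u ⟨rfl | rfl | rfl, hu⟩ <;> simp_all

/-- If a subfan starting and ending with a rim element leaves out exactly three elements, then those
form a triangle, since the rank computation for the subfan gives them rank two. -/
lemma FanWindow.isCircuit_compl [M.RankFinite] (hM : NoTwoSep M) (hE : M.E = e '' Ico 0 (2 * m))
    (hinj : InjOn e (Ico 0 (2 * m))) (hm : 2 ≤ m) (hr : M.eRank = m)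
    (h : FanWindow M sp e a (2 * m - 3)) (ha : a ≤ 3) (hs : sp a = false) {i j k : ℕ}
    (hi : i < 2 * m) (hj : j < 2 * m) (hk : k < 2 * m) (hij : i ≠ j) (hik : i ≠ k) (hjk : j ≠ k)
    (hi' : i ∉ Ico a (a + (2 * m - 3))) (hj' : j ∉ Ico a (a + (2 * m - 3)))
    (hk' : k ∉ Ico a (a + (2 * m - 3))) : M.IsCircuit {e i, e j, e k} := by
  have hmemE : ∀ q < 2 * m, e q ∈ M.E := fun q hq => by
    rw [hE]
    exact mem_image_of_mem _ ⟨Nat.zero_le _, hq⟩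
  have hne : ∀ p q, p < 2 * m → q < 2 * m → p ≠ q → e p ≠ e q := fun p q hp hq hpq h =>
    hpq (hinj ⟨Nat.zero_le _, hp⟩ ⟨Nat.zero_le _, hq⟩ h)
  have hout : ∀ q < 2 * m, q ∉ Ico a (a + (2 * m - 3)) →
      e q ∈ M.E \ e '' Ico a (a + (2 * m - 3)) := by
    refine fun q hq hq' => ⟨hmemE q hq, ?_⟩
    rintro ⟨p, hp, hpq⟩
    have hp' := hp.2
    have := hinj ⟨Nat.zero_le _, by omega⟩ ⟨Nat.zero_le _, hq⟩ hpq
    exact hq' (this ▸ hp)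
  have hrk : M.eRk (M.E \ e '' Ico a (a + (2 * m - 3))) ≤ 2 := by
    rcases hm.eq_or_lt with rfl | hm3
    · exact (M.eRk_le_eRank _).trans (by rw [hr]; rfl)
    · obtain ⟨-, -, -, h1⟩ := h.core hM (by omega)
        (two_le_encard_compl hE hinj h.inj (by omega) (by omega))
      rw [part_encard h.alt false h.inj, if_pos hs, hr] at h1
      obtain ⟨x, hx⟩ := ENat.ne_top_iff_exists.1 (Matroid.eRk_ne_top_iff.2
        (M.isRkFinite_set (M.E \ e '' Ico a (a + (2 * m - 3)))))
      rw [← hx] at h1 ⊢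
      norm_cast at *
      omega
  refine isCircuit_of_eRk_le_two hM ?_ (hmemE i hi) (hmemE j hj) (hmemE k hk) (hne _ _ hi hj hij)
    (hne _ _ hi hk hik) (hne _ _ hj hk hjk) ((M.eRk_mono ?_).trans hrk)
  · rw [encard_ground hE hinj]
    exact_mod_cast (by omega : 4 ≤ 2 * m)
  · rintro _ (rfl | rfl | rfl)
    exacts [hout i hi hi', hout j hj hj', hout k hk hk']

/-- The triangles of the fan close up cyclically. -/
lemma FanWindow.isCircuit_cyclic [M.RankFinite] (hM : NoTwoSep M) (hE : M.E = e '' Ico 0 (2 * m))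
    (hinj : InjOn e (Ico 0 (2 * m))) (hm : 2 ≤ m) (hr : M.eRank = m)
    (h : FanWindow M sp e 0 (2 * m - 1)) {i : ℕ} (hs : sp i = true) :
    M.IsCircuit {e (i % (2 * m)), e ((i + 1) % (2 * m)), e ((i + 2) % (2 * m))} := by
  have hq : i % (2 * m) < 2 * m := Nat.mod_lt _ (by omega)
  have hsq : sp (i % (2 * m)) = true := by
    rw [← hs]
    conv_rhs => rw [← Nat.mod_add_div i (2 * m), mul_assoc, sp_add_two_mul h.alt]
  rw [← Nat.mod_add_mod i, ← Nat.mod_add_mod i (2 * m) 2]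
  generalize i % (2 * m) = q at hq hsq ⊢
  rcases lt_or_ge (q + 2) (2 * m - 1) with h1 | h1
  · rw [Nat.mod_eq_of_lt (by omega : q + 1 < 2 * m), Nat.mod_eq_of_lt (by omega : q + 2 < 2 * m)]
    exact h.tri q (Nat.zero_le _) (by omega) hsq
  · have hlt : ∀ x, x % (2 * m) < 2 * m := fun x => Nat.mod_lt _ (by omega)
    -- the three indices are `q, q + 1, q + 2` modulo `2 * m`; the rest is `[q + 3 - 2 * m, q)`
    have hsa : sp (q + 3 - 2 * m) = false := by
      have h2 := sp_add_two_mul h.alt (q + 3 - 2 * m) m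
      rw [show q + 3 - 2 * m + 2 * m = q + 1 + 2 * 1 by omega, sp_add_two_mul h.alt, h.alt,
        hsq] at h2
      exact h2.symm
    have hm1 : (q + 1) % (2 * m) = if q + 1 < 2 * m then q + 1 else q + 1 - 2 * m := by
      split_ifs with h2
      · exact Nat.mod_eq_of_lt h2
      · rw [Nat.mod_eq_sub_mod (by omega), Nat.mod_eq_of_lt (by omega)]
    have hm2 : (q + 2) % (2 * m) = if q + 2 < 2 * m then q + 2 else q + 2 - 2 * m := by
      split_ifs with h2
      · exact Nat.mod_eq_of_lt h2
      · rw [Nat.mod_eq_sub_mod (by omega), Nat.mod_eq_of_lt (by omega)]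
    refine (h.mono (Nat.zero_le (q + 3 - 2 * m)) (by omega)).isCircuit_compl hM hE hinj hm hr
      (by omega) hsa hq (hlt _) (hlt _) ?_ ?_ ?_ ?_ ?_ ?_
    · rw [hm1]; split_ifs <;> omega
    · rw [hm2]; split_ifs <;> omega
    · rw [hm1, hm2]; split_ifs <;> omega
    · rw [mem_Ico]; omega
    · rw [mem_Ico, hm1]; split_ifs <;> omega
    · rw [mem_Ico, hm2]; split_ifs <;> omega

/-- A 3-connected matroid with a fan missing at most one element is a wheel or a whirl. -/
lemma FanWindow.isWheel_or_isWhirl [M.Finite] (hM : NoTwoSep M) (hE : M.E = e '' Ico 0 L)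
    (hinj : InjOn e (Ico 0 L)) (hL : 4 ≤ L) (h : FanWindow M sp e 0 (L - 1)) :
    IsWheel M ∨ IsWhirl M := by
  obtain ⟨m, rfl, hr, hr'⟩ := h.exists_eRank hM hE hinj hL
  have hm : 2 ≤ m := by omega
  have : NeZero m := ⟨by omega⟩
  have hE' : M✶.E = e '' Ico 0 (2 * m) := hE
  obtain ⟨c, hc, hsc⟩ : ∃ c, c ≤ 1 ∧ sp c = true := by
    cases hs : sp 0 with
    | true => exact ⟨0, by omega, hs⟩
    | false => exact ⟨1, le_rfl, by rw [← Nat.zero_add 1, h.alt, hs]; rfl⟩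
  have hsucc : ∀ (i : ZMod m) (d : ℕ),
      (2 * (i + 1).val + d) % (2 * m) = (2 * i.val + 2 + d) % (2 * m) := by
    intro i d
    have : Fact (1 < m) := ⟨hm⟩
    rw [ZMod.val_add, ZMod.val_one, ← Nat.mul_mod_mul_left, Nat.mod_add_mod]
    rfl
  have hsp : ∀ k d, sp (2 * k + d) = sp d := fun k d => by
    rw [add_comm, sp_add_two_mul h.alt]
  have hlt : ∀ x, x % (2 * m) < 2 * m := fun x => Nat.mod_lt _ (by omega)
  have hmod : ∀ x y, e (x % (2 * m)) = e (y % (2 * m)) → x ≡ y [MOD 2 * m] := fun x y hxy =>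
    hinj ⟨Nat.zero_le _, hlt x⟩ ⟨Nat.zero_le _, hlt y⟩ hxy
  have hcancel : ∀ x y, x < 2 * m → y < 2 * m → x + c ≡ y + c [MOD 2 * m] → x = y :=
    fun x y hx hy hxy => (Nat.ModEq.add_right_cancel' c hxy).eq_of_lt_of_lt hx hy
  refine FanAux.isWheel_or_isWhirl (M := M) (m := m)
    (s := fun i => e ((2 * i.val + c) % (2 * m)))
    (w := fun i => e ((2 * i.val + (c + 1)) % (2 * m))) hm ?_ ?_ ?_ ?_ hr
  · intro i
    have h1 := h.isCircuit_cyclic hM hE hinj hm hr (i := 2 * i.val + c) (by rw [hsp, hsc])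
    simp only [hsucc]
    rwa [show 2 * i.val + 2 + c = 2 * i.val + c + 2 by ring]
  · intro i
    have h1 := h.dual.isCircuit_cyclic hM.dual hE' hinj hm hr' (i := 2 * i.val + (c + 1))
      (by rw [hsp, h.alt, hsc]; rfl)
    simp only [hsucc]
    rwa [show 2 * i.val + 2 + c = 2 * i.val + (c + 1) + 1 by ring,
      show 2 * i.val + 2 + (c + 1) = 2 * i.val + (c + 1) + 2 by ring]
  · have hv : ∀ i : ZMod m, i.val < m := ZMod.val_lt
    rintro (i | i) (j | j) hij
    · have := hcancel _ _ (by have := hv i; omega) (by have := hv j; omega) (hmod _ _ hij)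
      rw [ZMod.val_injective m (by omega : i.val = j.val)]
    · have h1 := hmod _ _ hij
      rw [show 2 * j.val + (c + 1) = 2 * j.val + 1 + c by ring] at h1
      have := hcancel _ _ (by have := hv i; omega) (by have := hv j; omega) h1
      omega
    · have h1 := hmod _ _ hij
      rw [show 2 * i.val + (c + 1) = 2 * i.val + 1 + c by ring] at h1
      have := hcancel _ _ (by have := hv i; omega) (by have := hv j; omega) h1
      omega
    · have h1 := hmod _ _ hij
      rw [show 2 * i.val + (c + 1) = 2 * i.val + 1 + c by ring,
        show 2 * j.val + (c + 1) = 2 * j.val + 1 + c by ring] at h1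
      have := hcancel _ _ (by have := hv i; omega) (by have := hv j; omega) h1
      rw [ZMod.val_injective m (by omega : i.val = j.val)]
  · rw [hE]
    refine Subset.antisymm ?_ ?_
    · rintro _ ⟨i, ⟨-, hi⟩, rfl⟩
      -- `i + 2 * m - c` is `2 * t` or `2 * t + 1`; the index `t` modulo `m` names the element
      have hval : ∀ t d, (2 * ((t : ℕ) : ZMod m).val + d) % (2 * m) = (2 * t + d) % (2 * m) := by
        intro t d
        rw [ZMod.val_natCast, ← Nat.mul_mod_mul_left, Nat.mod_add_mod]
      have hi2 : (i + 2 * m) % (2 * m) = i := by rw [Nat.add_mod_right, Nat.mod_eq_of_lt hi]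
      rcases Nat.even_or_odd' (i + 2 * m - c) with ⟨t, ht | ht⟩
      · refine Or.inl ⟨(t : ℕ), ?_⟩
        simp only [hval]
        rw [show 2 * t + c = i + 2 * m by omega, hi2]
      · refine Or.inr ⟨(t : ℕ), ?_⟩
        simp only [hval]
        rw [show 2 * t + (c + 1) = i + 2 * m by omega, hi2]
    · rintro _ (⟨i, rfl⟩ | ⟨i, rfl⟩) <;> exact mem_image_of_mem _ ⟨Nat.zero_le _, hlt _⟩

end Closing

end FanAux

namespace FanAux

/-! ### Fans of the statement as windows -/

lemma fanWindow_of_isFanFun {M : Matroid α} {b : Bool} {n : ℕ} {e : ℕ → α}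
    (h : IsFanFun M b n e) : FanWindow M (posBool b) e 1 n where
  alt i := by
    unfold posBool
    rcases Nat.mod_two_eq_zero_or_one i with hi | hi
    · simp [hi, Nat.add_mod]
    · simp [hi, Nat.add_mod]
  inj i hi j hj hij := by
    have h1 := hi.1
    have h2 := hi.2
    have h3 := hj.1
    have h4 := hj.2
    exact h.2.1 i j h1 (by omega) h3 (by omega) hij
  mem i hi hi' := h.2.2.1 i hi (by omega)
  tri i hi hi' hs := by
    have h1 := h.2.2.2 i hi (by omega)
    rw [hs] at h1
    exact (isCircuit_iff _ _).1 h1.1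
  triad i hi hi' hs := by
    have h1 := h.2.2.2 i hi (by omega)
    rw [hs] at h1
    exact (isCircuit_iff _ _).1 h1.1

lemma fanSet_eq (n : ℕ) (e : ℕ → α) : fanSet n e = e '' Ico 1 (1 + n) := by
  ext x
  constructor
  · rintro ⟨i, h1, h2, rfl⟩
    exact ⟨i, ⟨h1, by omega⟩, rfl⟩
  · rintro ⟨i, ⟨h1, h2⟩, rfl⟩
    exact ⟨i, h1, by omega, rfl⟩

lemma rimSet_eq (b : Bool) (n : ℕ) (e : ℕ → α) :
    rimSet b n e = part (posBool b) e false 1 n := by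
  ext x
  constructor
  · rintro ⟨i, h1, h2, h3, rfl⟩
    exact ⟨i, ⟨⟨h1, by omega⟩, h3⟩, rfl⟩
  · rintro ⟨i, ⟨⟨h1, h2⟩, h3⟩, rfl⟩
    exact ⟨i, h1, by omega, h3, rfl⟩

/-- Replaces `e 1, …, e n` by a zero-based sequence, with one further element appended when the
fan misses one. -/
lemma isWheel_or_isWhirl_of_encard_compl_le_one {M : Matroid α} [M.RankFinite] (hM : NoTwoSep M)
    (h4 : 4 ≤ M.E.encard) {sp : ℕ → Bool} {e : ℕ → α} {n : ℕ} (hn : 3 ≤ n)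
    (h : FanWindow M sp e 1 n) (hX : (M.E \ e '' Ico 1 (1 + n)).encard ≤ 1) :
    IsWheel M ∨ IsWhirl M := by
  have hFE : e '' Ico 1 (1 + n) ⊆ M.E := by
    rintro _ ⟨i, hi, rfl⟩
    exact h.mem i hi.1 hi.2
  have hEfin : M.E.Finite := by
    rw [← union_sdiff_cancel hFE]
    exact ((finite_Ico _ _).image _).union (finite_of_encard_le_coe (k := 1) (by exact_mod_cast hX))
  have : M.Finite := ⟨hEfin⟩
  have hsplit := union_sdiff_cancel hFE
  rcases encard_le_one_iff_eq.1 hX with h0 | ⟨x, hx⟩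
  · rw [h0, union_empty] at hsplit
    have hEe : M.E = (fun i => e (i + 1)) '' Ico 0 n := by
      rw [← hsplit]
      ext y
      constructor
      · rintro ⟨i, ⟨h1, h2⟩, rfl⟩
        exact ⟨i - 1, ⟨Nat.zero_le _, by omega⟩, by simp only [Nat.sub_add_cancel h1]⟩
      · rintro ⟨i, ⟨-, h2⟩, rfl⟩
        exact ⟨i + 1, ⟨by omega, by omega⟩, rfl⟩
    have hinj : InjOn (fun i => e (i + 1)) (Ico 0 n) := by
      rintro i ⟨-, hi⟩ j ⟨-, hj⟩ hij
      have := h.inj ⟨by omega, by omega⟩ ⟨by omega, by omega⟩ hij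
      omega
    have hn4 : 4 ≤ n := by
      rw [encard_ground hEe hinj] at h4
      exact_mod_cast h4
    refine FanWindow.isWheel_or_isWhirl (sp := fun i => sp (i + 1)) hM hEe hinj hn4 ?_
    exact {
      alt := fun i => h.alt _
      inj := hinj.mono (Ico_subset_Ico le_rfl (by omega))
      mem := fun i _ hi => h.mem _ (by omega) (by omega)
      tri := fun i _ hi hs => h.tri (i + 1) (by omega) (by omega) hs
      triad := fun i _ hi hs => h.triad (i + 1) (by omega) (by omega) hs }
  · rw [hx] at hsplit
    have hxm : x ∈ M.E \ e '' Ico 1 (1 + n) := by rw [hx]; rfl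
    set f : ℕ → α := fun i => if i < n then e (i + 1) else x with hf
    have hf1 : ∀ i < n, f i = e (i + 1) := fun i hi => if_pos hi
    have hf2 : f n = x := if_neg (lt_irrefl n)
    have hEe : M.E = f '' Ico 0 (n + 1) := by
      rw [← hsplit]
      ext y
      constructor
      · rintro (⟨i, ⟨h1, h2⟩, rfl⟩ | rfl)
        · exact ⟨i - 1, ⟨Nat.zero_le _, by omega⟩, by
            rw [hf1 _ (by omega), Nat.sub_add_cancel h1]⟩
        · exact ⟨n, ⟨Nat.zero_le _, by omega⟩, hf2⟩
      · rintro ⟨i, ⟨-, h2⟩, rfl⟩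
        rcases Nat.lt_succ_iff_lt_or_eq.1 h2 with h3 | rfl
        · rw [hf1 _ h3]
          exact Or.inl ⟨i + 1, ⟨by omega, by omega⟩, rfl⟩
        · exact Or.inr hf2
    have hxne : ∀ i < n, e (i + 1) ≠ x := fun i hi hix =>
      hxm.2 ⟨i + 1, ⟨by omega, by omega⟩, hix⟩
    have hinj : InjOn f (Ico 0 (n + 1)) := by
      rintro i ⟨-, hi⟩ j ⟨-, hj⟩ hij
      rcases Nat.lt_succ_iff_lt_or_eq.1 hi with hi | rfl <;>
        rcases Nat.lt_succ_iff_lt_or_eq.1 hj with hj | rfl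
      · rw [hf1 _ hi, hf1 _ hj] at hij
        have := h.inj ⟨by omega, by omega⟩ ⟨by omega, by omega⟩ hij
        omega
      · rw [hf1 _ hi, hf2] at hij
        exact absurd hij (hxne i hi)
      · rw [hf1 _ hj, hf2] at hij
        exact absurd hij.symm (hxne j hj)
      · rfl
    refine FanWindow.isWheel_or_isWhirl (sp := fun i => sp (i + 1)) hM hEe hinj (by omega) ?_
    exact {
      alt := fun i => h.alt _
      inj := hinj.mono (Ico_subset_Ico le_rfl (by omega))
      mem := fun i _ hi => by
        rw [hf1 i (by omega)]
        exact h.mem _ (by omega) (by omega)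
      tri := fun i _ hi hs => by
        rw [hf1 i (by omega), hf1 (i + 1) (by omega), hf1 (i + 2) (by omega)]
        exact h.tri (i + 1) (by omega) (by omega) hs
      triad := fun i _ hi hs => by
        rw [hf1 i (by omega), hf1 (i + 1) (by omega), hf1 (i + 2) (by omega)]
        exact h.triad (i + 1) (by omega) (by omega) hs }

end FanAux

open FanAux

/-- If `F = (e 1, ..., e n)` is a fan of the representable 3-connected matroid `N`
(which is neither a wheel nor a whirl and has at least four elements) and `R` is the set
of rim elements of `F`, then the local connectivity between `R` and `E - F` is one. -/
theorem statement7 (N : Matroid α) (hN3 : ThreeConn N)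
    (𝔽 : Type*) [Field 𝔽] (hrep : RepOver N 𝔽)
    (hNcard : 4 ≤ N.E.encard) (hNwheel : ¬ IsWheel N) (hNwhirl : ¬ IsWhirl N)
    (b : Bool) (n : ℕ) (e : ℕ → α) (hfan : IsFanFun N b n e) :
    erk N (rimSet b n e) + erk N (N.E \ fanSet n e)
      = erk N (rimSet b n e ∪ (N.E \ fanSet n e)) + 1 := by
  rw [erk_eq, erk_eq, erk_eq, rimSet_eq, fanSet_eq]
  have hW := fanWindow_of_isFanFun hfan
  have hn : 3 ≤ n := hfan.1
  have hFE : e '' Ico 1 (1 + n) ⊆ N.E := by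
    rintro _ ⟨i, hi, rfl⟩
    exact hW.mem i hi.1 hi.2
  have hFfin : (e '' Ico 1 (1 + n)).Finite := (finite_Ico _ _).image _
  by_cases hfin : N.RankFinite
  · have hM := noTwoSep_of_threeConn hN3
    rcases le_or_gt 2 (N.E \ e '' Ico 1 (1 + n)).encard with hX | hX
    · obtain ⟨hR, hS, -, h1⟩ := hW.core hM (by omega) hX
      -- the complement of the spokes is spanning, as the spokes are coindependent
      have hunion : part (posBool b) e false 1 n ∪ (N.E \ e '' Ico 1 (1 + n))
          = N.E \ part (posBool b) e true 1 n := by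
        ext x
        constructor
        · rintro (⟨i, ⟨hi, hs⟩, rfl⟩ | ⟨hx, hx'⟩)
          · refine ⟨hFE ⟨i, hi, rfl⟩, ?_⟩
            rintro ⟨j, ⟨hj, hs'⟩, hij⟩
            rw [hW.inj hj hi hij, hs] at hs'
            exact Bool.false_ne_true hs'
          · exact ⟨hx, fun h => hx' (part_subset _ _ _ _ _ h)⟩
        · rintro ⟨hx, hx'⟩
          by_cases hxF : x ∈ e '' Ico 1 (1 + n)
          · obtain ⟨i, hi, rfl⟩ := hxF
            refine Or.inl ⟨i, ⟨hi, ?_⟩, rfl⟩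
            cases hs : posBool b i with
            | false => rfl
            | true => exact absurd ⟨i, ⟨hi, hs⟩, rfl⟩ hx'
          · exact Or.inr ⟨hx, hxF⟩
      have hspan : N.Spanning (N.E \ part (posBool b) e true 1 n) :=
        Matroid.Coindep.compl_spanning hS
      rw [hunion, hspan.eRk_eq, hR.eRk_eq_encard, add_comm, h1]
    · exfalso
      have hX1 : (N.E \ e '' Ico 1 (1 + n)).encard ≤ 1 :=
        Order.le_of_lt_add_one (by rwa [one_add_one_eq_two])
      exact (isWheel_or_isWhirl_of_encard_compl_le_one hM hNcard hn hW hX1).elim hNwheel hNwhirl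
  · -- in infinite rank both sides are infinite, because the fan is finite
    have htop : N.eRk (N.E \ e '' Ico 1 (1 + n)) = ⊤ := by
      by_contra hne
      apply hfin
      rw [← Matroid.eRank_ne_top_iff, ← Matroid.eRk_ground, ← union_sdiff_cancel hFE]
      refine ne_top_of_le_ne_top ?_ (N.eRk_union_le_eRk_add_eRk _ _)
      exact WithTop.add_ne_top.2 ⟨Matroid.eRk_ne_top_iff.2 (N.isRkFinite_of_finite hFfin), hne⟩
    have htop' : N.eRk (part (posBool b) e false 1 n ∪ (N.E \ e '' Ico 1 (1 + n))) = ⊤ :=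
      top_le_iff.1 (htop ▸ N.eRk_mono subset_union_right)
    rw [htop, htop', add_top, top_add]
end

section
/- Let (e_1, ..., e_n) be a fan of a matroid M. Then the set {e_1, ..., e_n} is 3-separating in M, that is, λ_M({e_1, ..., e_n}) <= 2. -/
/-!
Write `X m = {e 1, ..., e m}`. Then `r (X m) + r (E - X m) ≤ r M + 2` for every
`2 ≤ m ≤ n`, by induction on `m`. For `m = 2` this holds because `r (X 2) ≤ 2`. Passing
from `X m` to `X (m + 1)` adds `f = e (m + 1)`, which lies in a triangle or a triad together
with `e (m - 1)` and `e m`: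

* in the triangle case `f` is spanned by `X m`, so the first rank does not change, and the
  second one does not increase;
* in the triad case `f` is not spanned by `E - X (m + 1)`, since a circuit and a cocircuit
  cannot meet in exactly one element (`notMem_closure_of_isCocircuit`); hence removing `f`
  lowers the second rank by one, while the first rank grows by at most one.
-/

open Matroid Set

universe u

variable {α : Type u}

open PaperDefs

lemma erk_eq_eRk (M : Matroid α) (X : Set α) : erk M X = M.eRk X := by
  apply le_antisymm
  · exact iSup₂_le fun I hI => hI.1.encard_le_eRk_of_subset hI.2
  · obtain ⟨I, hI⟩ := M.exists_isBasis' X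
    rw [hI.eRk_eq_encard]
    exact le_iSup₂_of_le I ⟨hI.indep, hI.subset⟩ le_rfl

lemma isCircuit_of_paper {M : Matroid α} {C : Set α} (h : PaperDefs.IsCircuit M C) :
    M.IsCircuit C :=
  isCircuit_iff_forall_ssubset.2 ⟨h.1, fun I hI => h.2 I hI⟩

/-- An element of a cocircuit `K` is not spanned by a set disjoint from `K`. -/
lemma notMem_closure_of_isCocircuit {M : Matroid α} {K Y : Set α} {f : α}
    (hK : M.IsCocircuit K) (hf : f ∈ K) (hY : Disjoint K Y) : f ∉ M.closure Y := by
  intro hcl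
  have hfY : f ∉ Y := fun h => disjoint_left.1 hY hf h
  obtain ⟨C, hCY, hC, hfC⟩ := exists_isCircuit_of_mem_closure hcl hfY
  refine hC.inter_isCocircuit_ne_singleton hK (e := f) ?_
  ext x
  constructor
  · rintro ⟨hxC, hxK⟩
    rcases hCY hxC with rfl | hxY
    · rfl
    · exact absurd hxY (disjoint_left.1 hY hxK)
  · rintro rfl
    exact ⟨hfC, hf⟩

lemma fanSet_succ (m : ℕ) (e : ℕ → α) :
    fanSet (m + 1) e = insert (e (m + 1)) (fanSet m e) := by
  ext x
  constructor
  · rintro ⟨i, h1, h2, rfl⟩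
    rcases Nat.lt_or_ge m i with h | h
    · obtain rfl : i = m + 1 := by omega
      exact Or.inl rfl
    · exact Or.inr ⟨i, h1, h, rfl⟩
  · rintro (rfl | ⟨i, h1, h2, rfl⟩)
    · exact ⟨m + 1, by omega, le_rfl, rfl⟩
    · exact ⟨i, h1, by omega, rfl⟩

lemma mem_fanSet {m i : ℕ} (e : ℕ → α) (h1 : 1 ≤ i) (h2 : i ≤ m) : e i ∈ fanSet m e :=
  ⟨i, h1, h2, rfl⟩

lemma eRk_fanSet_two_le (M : Matroid α) (e : ℕ → α) : M.eRk (fanSet 2 e) ≤ 2 := by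
  have h : fanSet 2 e ⊆ {e 1, e 2} := by
    rintro x ⟨i, h1, h2, rfl⟩
    obtain rfl | rfl : i = 1 ∨ i = 2 := by omega
    · exact Or.inl rfl
    · exact Or.inr rfl
  refine (M.eRk_le_encard _).trans ((encard_le_encard h).trans ?_)
  refine (encard_insert_le _ _).trans ?_
  rw [encard_singleton, one_add_one_eq_two]

/-- Every initial segment of length at least two of a fan is 3-separating. -/
lemma fanSet_separating (M : Matroid α) (b : Bool) (n : ℕ) (e : ℕ → α)
    (hfan : IsFanFun M b n e) (m : ℕ) (hm : 2 ≤ m) (hmn : m ≤ n) :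
    M.eRk (fanSet m e) + M.eRk (M.E \ fanSet m e) ≤ M.eRank + 2 := by
  obtain ⟨-, hinj, hE, htri⟩ := hfan
  induction m, hm using Nat.le_induction with
  | base =>
    rw [add_comm]
    exact add_le_add (M.eRk_le_eRank _) (eRk_fanSet_two_le M e)
  | succ m hm ih =>
    have ih := ih (by omega)
    obtain ⟨k, rfl⟩ : ∃ k, m = k + 1 := ⟨m - 1, by omega⟩
    have ht := htri k (by omega) (by omega)
    set X := fanSet (k + 1) e with hX
    set f := e (k + 1 + 1) with hf
    have hfE : f ∈ M.E := hE _ (by omega) (by omega)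
    have hk : e k ∈ X := mem_fanSet e (by omega) (by omega)
    have hk1 : e (k + 1) ∈ X := mem_fanSet e (by omega) le_rfl
    have hfX : f ∉ X := by
      rintro ⟨i, h1, h2, h⟩
      have := hinj _ _ (by omega) (by omega) h1 (by omega) h
      omega
    rw [fanSet_succ]
    change M.eRk (insert f X) + M.eRk (M.E \ insert f X) ≤ _
    change TriOrTriad M _ {e k, e (k + 1), f} at ht
    cases hb : posBool b k with
    | true =>
      rw [hb] at ht
      have hC : M.IsCircuit {e k, e (k + 1), f} := isCircuit_of_paper ht.1
      have hcl : f ∈ M.closure X := by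
        refine M.closure_subset_closure ?_
          (hC.mem_closure_sdiff_singleton_of_mem (e := f) (by simp))
        rintro x ⟨rfl | rfl | rfl, hx⟩
        · exact hk
        · exact hk1
        · exact absurd rfl hx
      have h1 : M.eRk (insert f X) = M.eRk X := by
        rw [← M.eRk_closure_eq (insert f X), closure_insert_eq_of_mem_closure hcl,
          M.eRk_closure_eq]
      rw [h1]
      exact (add_le_add le_rfl (M.eRk_mono (sdiff_subset_sdiff_right (subset_insert _ _)))).trans ih
    | false =>
      rw [hb] at ht
      have hK : M.IsCocircuit {e k, e (k + 1), f} := isCircuit_of_paper (M := M✶) ht.1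
      have hcl : f ∉ M.closure (M.E \ insert f X) := by
        refine notMem_closure_of_isCocircuit hK (by simp) (disjoint_left.2 ?_)
        rintro x (rfl | rfl | rfl) ⟨-, hx⟩
        · exact hx (Or.inr hk)
        · exact hx (Or.inr hk1)
        · exact hx (Or.inl rfl)
      have h1 : M.eRk (M.E \ X) = M.eRk (M.E \ insert f X) + 1 := by
        rw [← eRk_insert_eq_add_one ⟨hfE, hcl⟩]
        congr 1
        ext x
        by_cases hx : x = f
        · subst hx
          simp [hfE, hfX]
        · simp [hx]
      calc M.eRk (insert f X) + M.eRk (M.E \ insert f X)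
          ≤ (M.eRk X + 1) + M.eRk (M.E \ insert f X) :=
            add_le_add (M.eRk_insert_le_add_one f X) le_rfl
        _ = M.eRk X + M.eRk (M.E \ X) := by rw [h1, add_assoc, add_comm 1]
        _ ≤ _ := ih

/-- The set of elements of a fan of `M` is 3-separating in `M`. -/
theorem statement8 (M : Matroid α) (b : Bool) (n : ℕ) (e : ℕ → α)
    (hfan : IsFanFun M b n e) :
    erk M (fanSet n e) + erk M (M.E \ fanSet n e) ≤ erk M M.E + 2 := by
  simp only [erk_eq_eRk]
  rw [eRk_ground]
  exact fanSet_separating M b n e hfan n (by have := hfan.1; omega) le_rfl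
end
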